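/- arXiv:1802.01510 — 3 statements merged into one kernel-verified Lean document; each statement's English description precedes it below -/
import Mathlib

section
/- Any minimizer E of the relative fractional perimeter P_s(·, ℝ^N_+) among subsets of the closed half-ball B_R^+ = B_R ∩ ℝ^N_+ with |E| = 1, taken closed, must intersect the hyperplane {x_N = 0}. -/
open MeasureTheory ENNReal

/-- Relative fractional `s`-perimeter of `E` in `Ω` (ambient dimension `N+1`). -/
noncomputable def relPerimeter (N : ℕ) (s : ℝ)
    (E Ω : Set (EuclideanSpace ℝ (Fin (N+1)))) : ℝ≥0∞ :=
  ∫⁻ x in E, ∫⁻ y in Ω \ E, ENNReal.ofReal (‖x - y‖ ^ (-((N + 1 : ℝ) + 2*s)))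

/-!
If `E` lies in `{a ≤ x_N}` with `a > 0`, translate it downwards by `a`. The translate still lies in
the half-ball, and its energy equals that of `E` relative to the smaller half-space `{a < x_N}`:
the interaction of `E` with the slab `{0 < x_N ≤ a}`, which has positive measure and misses `E` up
to its top face, has been saved. The saving is strict only if the energy of `E` is finite. It is,
because the half-ball around the origin with the volume of `E` is a competitor and, for `s < 1/2`,
has finite energy: a point of the ball of radius `r` at distance `t` from the sphere interacts with
the complement by at most a multiple of `t ^ (-2s)`, which is integrable.
-/

open Metric Module Set
open scoped Pointwise

lemma indicator_Ioi_comp_norm {V F : Type*} [SeminormedAddCommGroup V] [Zero F] (f : ℝ → F)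
    (r : ℝ) :
    (fun x : V => (Ioi r).indicator f ‖x‖) = (closedBall (0 : V) r)ᶜ.indicator (f ‖·‖) := by
  ext x
  by_cases hx : r < ‖x‖ <;> simp [indicator, hx]

lemma measurable_lintegral_norm_sub_rpow {V : Type*} [SeminormedAddCommGroup V]
    [SecondCountableTopology V] [MeasurableSpace V] [OpensMeasurableSpace V] (μ : Measure V)
    [SFinite μ] (α : ℝ) : Measurable fun x => ∫⁻ y, ENNReal.ofReal (‖x - y‖ ^ α) ∂μ :=
  Measurable.lintegral_prod_right' (f := fun p => ENNReal.ofReal (‖p.1 - p.2‖ ^ α)) <|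
    ((continuous_fst.sub continuous_snd).norm.measurable.pow_const α).ennreal_ofReal

lemma norm_le_norm_add_of_inner_nonneg {V : Type*} [SeminormedAddCommGroup V]
    [InnerProductSpace ℝ V] {x v : V} (h : 0 ≤ inner ℝ x v) : ‖x‖ ≤ ‖x + v‖ := by
  refine le_of_sq_le_sq ?_ (norm_nonneg _)
  rw [norm_add_sq_real]
  nlinarith [sq_nonneg ‖v‖]

section NormedSpace

variable {V : Type*} [NormedAddCommGroup V] [NormedSpace ℝ V] [FiniteDimensional ℝ V]
  [MeasurableSpace V] [BorelSpace V] (μ : Measure V) [μ.IsAddHaarMeasure]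
  [Nontrivial V]

lemma exists_addHaar_closedBall_inter_eq {S : Set V} (hS : ∀ t : ℝ, 0 < t → t • S = S)
    {R : ℝ} {c : ℝ≥0∞} (hc : c ≤ μ (closedBall 0 R ∩ S)) :
    ∃ r ≤ R, μ (closedBall 0 r ∩ S) = c := by
  rcases eq_or_ne c 0 with rfl | hc₀
  · exact ⟨min R (-1), min_le_left _ _, by simp⟩
  set m := μ (closedBall 0 R ∩ S)
  have hm₀ : m ≠ 0 := ne_bot_of_le_ne_bot hc₀ hc
  have hm : m ≠ ∞ := measure_ne_top_of_subset inter_subset_left measure_closedBall_lt_top.ne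
  have hR : 0 ≤ R := nonempty_closedBall.1 (nonempty_of_measure_ne_zero hm₀).left
  have hratio : c / m ≠ 0 := ENNReal.div_ne_zero.2 ⟨hc₀, hm⟩
  have hratio_le : c / m ≤ 1 := ENNReal.div_le_of_le_mul (by rwa [one_mul])
  have hratio_top : c / m ≠ ∞ := ne_top_of_le_ne_top one_ne_top hratio_le
  set t : ℝ := (c / m).toReal ^ (finrank ℝ V : ℝ)⁻¹
  have ht : 0 < t := Real.rpow_pos_of_pos (toReal_pos hratio hratio_top) _
  have ht_le : t ≤ 1 :=
    Real.rpow_le_one toReal_nonneg (toReal_le_of_le_ofReal one_pos.le (by simpa)) (by positivity)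
  have ht_pow : t ^ finrank ℝ V = (c / m).toReal :=
    Real.rpow_inv_natCast_pow toReal_nonneg finrank_pos.ne'
  have hdilate : closedBall 0 (t * R) ∩ S = t • (closedBall 0 R ∩ S) := by
    rw [smul_set_inter₀ ht.ne', smul_closedBall' ht.ne', smul_zero, Real.norm_of_nonneg ht.le,
      hS t ht]
  refine ⟨t * R, mul_le_of_le_one_left hR ht_le, ?_⟩
  rw [hdilate, Measure.addHaar_smul, ht_pow, abs_of_nonneg toReal_nonneg, ofReal_toReal hratio_top,
    ENNReal.div_mul_cancel hm₀ hm]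

lemma integrableOn_compl_closedBall_fun_norm_addHaar {F : Type*} [NormedAddCommGroup F]
    [NormedSpace ℝ F] {f : ℝ → F} {r : ℝ} (hr : 0 ≤ r) :
    IntegrableOn (f ‖·‖) (closedBall (0 : V) r)ᶜ μ ↔
      IntegrableOn (fun y : ℝ => y ^ (finrank ℝ V - 1) • f y) (Ioi r) := by
  rw [← integrable_indicator_iff measurableSet_closedBall.compl, ← indicator_Ioi_comp_norm,
    integrable_fun_norm_addHaar, ← indicator_smul (Ioi r) (fun y : ℝ => y ^ (finrank ℝ V - 1)) f,
    IntegrableOn, integrable_indicator_iff measurableSet_Ioi, IntegrableOn, IntegrableOn,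
    Measure.restrict_restrict measurableSet_Ioi, inter_eq_left.2 (Ioi_subset_Ioi hr)]

lemma setIntegral_compl_closedBall_fun_norm_addHaar {F : Type*} [NormedAddCommGroup F]
    [NormedSpace ℝ F] (f : ℝ → F) {r : ℝ} (hr : 0 ≤ r) :
    ∫ x in (closedBall (0 : V) r)ᶜ, f ‖x‖ ∂μ =
      finrank ℝ V • μ.real (ball 0 1) • ∫ y in Ioi r, y ^ (finrank ℝ V - 1) • f y := by
  rw [← integral_indicator measurableSet_closedBall.compl, ← indicator_Ioi_comp_norm,
    integral_fun_norm_addHaar, ← indicator_smul (Ioi r) (fun y : ℝ => y ^ (finrank ℝ V - 1)) f,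
    integral_indicator measurableSet_Ioi, Measure.restrict_restrict measurableSet_Ioi,
    inter_eq_left.2 (Ioi_subset_Ioi hr)]

lemma lintegral_compl_closedBall_norm_rpow {α : ℝ} (hα : finrank ℝ V + α < 0) {r : ℝ}
    (hr : 0 < r) :
    ∫⁻ x in (closedBall (0 : V) r)ᶜ, ENNReal.ofReal (‖x‖ ^ α) ∂μ =
      ENNReal.ofReal (finrank ℝ V * μ.real (ball 0 1) / -(finrank ℝ V + α) *
        r ^ (finrank ℝ V + α)) := by
  have hradial : EqOn (fun y : ℝ => y ^ (finrank ℝ V - 1) • y ^ α)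
      (fun y => y ^ (finrank ℝ V + α - 1)) (Ioi r) := by
    intro y hy
    have hdim : ((finrank ℝ V - 1 : ℕ) : ℝ) = finrank ℝ V - 1 := by
      exact_mod_cast Nat.cast_pred finrank_pos
    simp only [smul_eq_mul]
    rw [← Real.rpow_natCast, ← Real.rpow_add (hr.trans hy), hdim, sub_add_eq_add_sub]
  have hint : IntegrableOn (fun x : V => ‖x‖ ^ α) (closedBall 0 r)ᶜ μ := by
    rw [integrableOn_compl_closedBall_fun_norm_addHaar μ (f := (· ^ α)) hr.le,
      integrableOn_congr_fun hradial measurableSet_Ioi]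
    exact integrableOn_Ioi_rpow_of_lt (by linarith) hr
  rw [← ofReal_integral_eq_lintegral_ofReal hint (.of_forall fun x => by positivity),
    setIntegral_compl_closedBall_fun_norm_addHaar μ (· ^ α) hr.le,
    setIntegral_congr_fun measurableSet_Ioi hradial, integral_Ioi_rpow_of_lt (by linarith) hr,
    sub_add_cancel, nsmul_eq_mul, smul_eq_mul, neg_div, div_neg]
  ring_nf

lemma integrableOn_ball_sub_norm_rpow {β : ℝ} (hβ : -1 < β) (r : ℝ) :
    IntegrableOn (fun x : V => (r - ‖x‖) ^ β) (ball 0 r) μ := by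
  rw [integrableOn_fun_norm_addHaar μ (f := fun t => (r - t) ^ β)]
  have hline : IntegrableOn (fun y : ℝ => (r - y) ^ β) (Ioo 0 r) := by
    have h := (intervalIntegral.intervalIntegrable_rpow' (a := r) (b := 0) hβ).comp_sub_left r
    simp only [sub_zero, sub_self] at h
    exact h.def'.mono_set (Ioo_subset_Ioc_self.trans Ioc_subset_uIoc)
  refine hline.bdd_mul (c := r ^ (finrank ℝ V - 1)) (by fun_prop) ?_
  refine ae_restrict_of_forall_mem measurableSet_Ioo fun y hy => ?_
  rw [Real.norm_of_nonneg (pow_nonneg hy.1.le _)]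
  exact pow_le_pow_left₀ hy.1.le hy.2.le _

lemma closedBall_ae_eq_ball_addHaar (x : V) (r : ℝ) : closedBall x r =ᵐ[μ] ball x r :=
  (ae_eq_of_subset_of_measure_ge ball_subset_closedBall
    (Measure.addHaar_closedBall_eq_addHaar_ball μ x r).le measurableSet_ball.nullMeasurableSet
    measure_closedBall_lt_top.ne).symm

lemma lintegral_compl_closedBall_norm_sub_rpow_le {α : ℝ} (hα : finrank ℝ V + α < 0) {r : ℝ}
    {x : V} (hx : x ∈ ball 0 r) :
    ∫⁻ y in (closedBall 0 r)ᶜ, ENNReal.ofReal (‖x - y‖ ^ α) ∂μ ≤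
      ENNReal.ofReal (finrank ℝ V * μ.real (ball 0 1) / -(finrank ℝ V + α) *
        (r - ‖x‖) ^ (finrank ℝ V + α)) := by
  have hsub : (closedBall (0 : V) r)ᶜ ⊆ (x - ·) ⁻¹' (closedBall 0 (r - ‖x‖))ᶜ := by
    intro y hy
    simp only [mem_compl_iff, mem_closedBall_zero_iff, not_le, mem_preimage] at hy ⊢
    linarith [norm_sub_norm_le y x, norm_sub_rev x y]
  rw [mem_ball_zero_iff] at hx
  calc
    _ ≤ ∫⁻ y in (x - ·) ⁻¹' (closedBall 0 (r - ‖x‖))ᶜ, ENNReal.ofReal (‖x - y‖ ^ α) ∂μ :=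
      lintegral_mono_set hsub
    _ = ∫⁻ z in (closedBall 0 (r - ‖x‖))ᶜ, ENNReal.ofReal (‖z‖ ^ α) ∂μ :=
      (μ.measurePreserving_sub_left x).setLIntegral_comp_preimage_emb
        (MeasurableEquiv.subLeft x).measurableEmbedding (fun z => ENNReal.ofReal (‖z‖ ^ α)) _
    _ = _ := lintegral_compl_closedBall_norm_rpow μ hα (sub_pos.2 hx)

lemma lintegral_closedBall_lintegral_compl_norm_sub_rpow_lt_top {α : ℝ}
    (hα : finrank ℝ V + α ∈ Ioo (-1) 0) (r : ℝ) :
    ∫⁻ x in closedBall (0 : V) r, ∫⁻ y in (closedBall 0 r)ᶜ,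
      ENNReal.ofReal (‖x - y‖ ^ α) ∂μ ∂μ < ∞ := by
  rw [setLIntegral_congr (closedBall_ae_eq_ball_addHaar μ 0 r)]
  refine (setLIntegral_mono' measurableSet_ball fun x hx =>
    lintegral_compl_closedBall_norm_sub_rpow_le μ hα.2 hx).trans_lt ?_
  exact ((integrableOn_ball_sub_norm_rpow μ hα.1 r).const_mul _).lintegral_lt_top

end NormedSpace

section RelPerimeter

variable {N : ℕ} {s : ℝ} {E Ω Ω' : Set (EuclideanSpace ℝ (Fin (N + 1)))}

lemma relPerimeter_mono_right (h : Ω ⊆ Ω') : relPerimeter N s E Ω ≤ relPerimeter N s E Ω' :=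
  lintegral_mono fun _ => lintegral_mono_set (sdiff_subset_sdiff_left h)

lemma relPerimeter_inter_le {H : Set (EuclideanSpace ℝ (Fin (N + 1)))} (h : Ω ⊆ H) :
    relPerimeter N s (E ∩ H) Ω ≤ relPerimeter N s E Ω := by
  have hsdiff : Ω \ (E ∩ H) = Ω \ E := by
    rw [sdiff_inter, sdiff_eq_empty.2 h, union_empty]
  rw [relPerimeter, hsdiff]
  exact lintegral_mono_set inter_subset_left

lemma relPerimeter_closedBall_lt_top (hs : 0 < s) (hs' : s < 1 / 2) (r : ℝ)
    (Ω : Set (EuclideanSpace ℝ (Fin (N + 1)))) : relPerimeter N s (closedBall 0 r) Ω < ∞ := by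
  have hexp : finrank ℝ (EuclideanSpace ℝ (Fin (N + 1))) + -((N + 1 : ℝ) + 2 * s) ∈ Ioo (-1) 0 := by
    rw [finrank_euclideanSpace_fin]
    push_cast
    constructor <;> linarith
  refine (relPerimeter_mono_right (subset_univ Ω)).trans_lt ?_
  rw [relPerimeter, ← compl_eq_univ_sdiff]
  exact lintegral_closedBall_lintegral_compl_norm_sub_rpow_lt_top volume hexp r

lemma relPerimeter_preimage_add_right (N : ℕ) (s : ℝ)
    (E Ω : Set (EuclideanSpace ℝ (Fin (N + 1)))) (v : EuclideanSpace ℝ (Fin (N + 1))) :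
    relPerimeter N s ((· + v) ⁻¹' E) ((· + v) ⁻¹' Ω) = relPerimeter N s E Ω := by
  have hpres := measurePreserving_add_right (volume : Measure (EuclideanSpace ℝ (Fin (N + 1)))) v
  have hemb := measurableEmbedding_addRight v
  rw [relPerimeter, relPerimeter, ← hpres.setLIntegral_comp_preimage_emb hemb _ E]
  refine lintegral_congr fun x => ?_
  rw [← hpres.setLIntegral_comp_preimage_emb hemb _ (Ω \ E), preimage_sdiff]
  simp only [add_sub_add_right_eq_sub]

lemma relPerimeter_union (hE : MeasurableSet E) (hΩ' : MeasurableSet Ω') (h : Disjoint Ω Ω') :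
    relPerimeter N s E (Ω ∪ Ω') = relPerimeter N s E Ω + relPerimeter N s E Ω' := by
  simp only [relPerimeter, union_sdiff_distrib]
  rw [← lintegral_add_right _ (measurable_lintegral_norm_sub_rpow _ _)]
  exact lintegral_congr fun x =>
    lintegral_union (hΩ'.diff hE) (h.mono sdiff_subset sdiff_subset)

lemma relPerimeter_pos (hE : volume E ≠ 0) (hΩ : volume (Ω \ E) ≠ 0) :
    0 < relPerimeter N s E Ω := by
  set α : ℝ := -((N + 1 : ℝ) + 2 * s)
  have hinner : ∀ x ∈ E, 0 < ∫⁻ y in Ω \ E, ENNReal.ofReal (‖x - y‖ ^ α) := by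
    intro x hx
    rw [setLIntegral_pos_iff (by fun_prop)]
    refine (pos_iff_ne_zero.2 hΩ).trans_le (measure_mono fun y hy => ⟨?_, hy⟩)
    have hxy : x ≠ y := ne_of_mem_of_not_mem hx hy.2
    exact (ENNReal.ofReal_pos.2 (Real.rpow_pos_of_pos (norm_sub_pos_iff.2 hxy) _)).ne'
  rw [relPerimeter, setLIntegral_pos_iff (measurable_lintegral_norm_sub_rpow _ _)]
  exact (pos_iff_ne_zero.2 hE).trans_le (measure_mono fun x hx => ⟨(hinner x hx).ne', hx⟩)

lemma relPerimeter_lt_relPerimeter (hE : MeasurableSet E) (hΩ : MeasurableSet Ω)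
    (hΩ' : MeasurableSet Ω') (h : Ω ⊆ Ω') (hvol : volume E ≠ 0)
    (hdiff : volume ((Ω' \ Ω) \ E) ≠ 0) (hfin : relPerimeter N s E Ω ≠ ∞) :
    relPerimeter N s E Ω < relPerimeter N s E Ω' := by
  rw [← union_sdiff_cancel h, relPerimeter_union hE (hΩ'.diff hΩ) disjoint_sdiff_right]
  exact ENNReal.lt_add_right hfin (relPerimeter_pos hvol hdiff).ne'

lemma smul_halfSpace (i : Fin (N + 1)) {t : ℝ} (ht : 0 < t) :
    t • {x : EuclideanSpace ℝ (Fin (N + 1)) | 0 ≤ x i} = {x | 0 ≤ x i} := by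
  ext x
  rw [mem_smul_set_iff_inv_smul_mem₀ ht.ne']
  simp [mul_nonneg_iff_of_pos_left (inv_pos.2 ht)]

lemma exists_isClosed_subset_halfBall_relPerimeter_lt_top (hs : 0 < s) (hs' : s < 1 / 2)
    (i : Fin (N + 1)) {R : ℝ} {c : ℝ≥0∞}
    (hc : c ≤ volume (closedBall (0 : EuclideanSpace ℝ (Fin (N + 1))) R ∩ {x | 0 ≤ x i})) :
    ∃ F : Set (EuclideanSpace ℝ (Fin (N + 1))), IsClosed F ∧
      F ⊆ closedBall 0 R ∩ {x | 0 ≤ x i} ∧ volume F = c ∧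
      relPerimeter N s F {x | 0 < x i} < ∞ := by
  obtain ⟨r, hrR, hr⟩ :=
    exists_addHaar_closedBall_inter_eq volume (fun _ => smul_halfSpace i) hc
  refine ⟨closedBall 0 r ∩ {x | 0 ≤ x i}, ?_, ?_, hr, ?_⟩
  · exact isClosed_closedBall.inter (isClosed_le continuous_const (by fun_prop))
  · exact inter_subset_inter_left _ (closedBall_subset_closedBall hrR)
  · exact (relPerimeter_inter_le fun x (hx : 0 < x i) => hx.le).trans_lt
      (relPerimeter_closedBall_lt_top hs hs' r _)

lemma preimage_add_single_subset_halfBall {i : Fin (N + 1)} {R a : ℝ} (ha : 0 ≤ a)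
    (hER : E ⊆ closedBall 0 R) (hEa : ∀ x ∈ E, a ≤ x i) :
    (· + EuclideanSpace.single i a) ⁻¹' E ⊆ closedBall 0 R ∩ {x | 0 ≤ x i} := by
  intro x hx
  have hxi : 0 ≤ x i := by simpa using hEa _ hx
  have hinner : 0 ≤ inner ℝ x (EuclideanSpace.single i a) := by
    simpa [EuclideanSpace.inner_single_right] using mul_nonneg ha hxi
  exact ⟨mem_closedBall_zero_iff.2 ((norm_le_norm_add_of_inner_nonneg hinner).trans
    (mem_closedBall_zero_iff.1 (hER hx))), hxi⟩

lemma relPerimeter_preimage_add_single_lt {i : Fin (N + 1)} {a : ℝ} (ha : 0 < a)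
    (hE : MeasurableSet E) (hEa : ∀ x ∈ E, a ≤ x i) (hvol : volume E ≠ 0)
    (hfin : relPerimeter N s E {x | 0 < x i} ≠ ∞) :
    relPerimeter N s ((· + EuclideanSpace.single i a) ⁻¹' E) {x | 0 < x i} <
      relPerimeter N s E {x | 0 < x i} := by
  have hcoord : Continuous fun x : EuclideanSpace ℝ (Fin (N + 1)) => x i := by fun_prop
  have hsub : {x : EuclideanSpace ℝ (Fin (N + 1)) | a < x i} ⊆ {x | 0 < x i} :=
    fun _ hx => ha.trans hx
  have hslab : volume (({x | 0 < x i} \ {x | a < x i}) \ E) ≠ 0 := by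
    have hopen : IsOpen {x : EuclideanSpace ℝ (Fin (N + 1)) | 0 < x i ∧ x i < a} :=
      (isOpen_lt continuous_const hcoord).and (isOpen_lt hcoord continuous_const)
    have hne : {x : EuclideanSpace ℝ (Fin (N + 1)) | 0 < x i ∧ x i < a}.Nonempty :=
      ⟨EuclideanSpace.single i (a / 2), by simpa using ha⟩
    refine mt (measure_mono_null ?_) (hopen.measure_ne_zero volume hne)
    exact fun x hx => ⟨⟨hx.1, hx.2.not_gt⟩, fun hxE => (hEa x hxE).not_gt hx.2⟩
  have htranslate : (· + EuclideanSpace.single i a) ⁻¹' {x | a < x i} =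
      {x : EuclideanSpace ℝ (Fin (N + 1)) | 0 < x i} := by
    ext x
    simp
  calc
    relPerimeter N s ((· + EuclideanSpace.single i a) ⁻¹' E) {x | 0 < x i}
      = relPerimeter N s E {x | a < x i} := by
        rw [← htranslate, relPerimeter_preimage_add_right]
    _ < relPerimeter N s E {x | 0 < x i} :=
        relPerimeter_lt_relPerimeter hE (isOpen_lt continuous_const hcoord).measurableSet
          (isOpen_lt continuous_const hcoord).measurableSet hsub hvol hslab
          (ne_top_of_le_ne_top hfin (relPerimeter_mono_right hsub))

end RelPerimeter

theorem minimizer_touches_hyperplane_general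
    (N : ℕ) (s R : ℝ) (hs : 0 < s) (hs' : s < 1 / 2)
    (E : Set (EuclideanSpace ℝ (Fin (N + 1)))) (hEclosed : IsClosed E)
    (hEsub : E ⊆ closedBall 0 R ∩ {x | 0 ≤ x (Fin.last N)})
    (hEvol : volume E ≠ 0)
    (hmin : ∀ F : Set (EuclideanSpace ℝ (Fin (N + 1))), IsClosed F →
      F ⊆ closedBall 0 R ∩ {x | 0 ≤ x (Fin.last N)} → volume F = volume E →
      relPerimeter N s E {x | 0 < x (Fin.last N)} ≤
        relPerimeter N s F {x | 0 < x (Fin.last N)}) :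
    ∃ x ∈ E, x (Fin.last N) = 0 := by
  have hER : E ⊆ closedBall 0 R := hEsub.trans inter_subset_left
  have hfin : relPerimeter N s E {x | 0 < x (Fin.last N)} ≠ ∞ := by
    obtain ⟨F, hF, hFsub, hFvol, hFfin⟩ :=
      exists_isClosed_subset_halfBall_relPerimeter_lt_top hs hs' (Fin.last N) (measure_mono hEsub)
    exact ((hmin F hF hFsub hFvol).trans_lt hFfin).ne
  obtain ⟨x₀, hx₀, hlowest⟩ : ∃ x₀ ∈ E, ∀ x ∈ E, x₀ (Fin.last N) ≤ x (Fin.last N) :=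
    ((isCompact_closedBall 0 R).of_isClosed_subset hEclosed hER).exists_isMinOn
      (nonempty_of_measure_ne_zero hEvol)
      (f := fun x : EuclideanSpace ℝ (Fin (N + 1)) => x (Fin.last N)) (by fun_prop)
  refine ⟨x₀, hx₀, le_antisymm (not_lt.1 fun hpos => ?_) (hEsub hx₀).2⟩
  refine (relPerimeter_preimage_add_single_lt hpos hEclosed.measurableSet hlowest hEvol
    hfin).not_ge (hmin _ (hEclosed.preimage (by fun_prop)) ?_ (measure_preimage_add_right _ _ _))
  exact preimage_add_single_subset_halfBall hpos.le hER hlowest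

/-- any closed minimizer `E` of the fractional perimeter relative to the
half-space `{x_N > 0}`, among closed subsets of the (closed) half-ball
`B_R ∩ {x_N ≥ 0}` of volume `1`, must intersect the hyperplane `{x_N = 0}`. -/
theorem minimizer_touches_hyperplane
    (N : ℕ) (s R : ℝ) (hs : 0 < s) (hs' : s < 1/2) (hR : 0 < R)
    (E : Set (EuclideanSpace ℝ (Fin (N+1)))) (hEclosed : IsClosed E)
    (hEsub : E ⊆ Metric.closedBall 0 R ∩ {x | 0 ≤ x (Fin.last N)})
    (hEvol : volume E = 1)
    (hmin : ∀ F : Set (EuclideanSpace ℝ (Fin (N+1))), IsClosed F →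
      F ⊆ Metric.closedBall 0 R ∩ {x | 0 ≤ x (Fin.last N)} → volume F = 1 →
      relPerimeter N s E {x | 0 < x (Fin.last N)} ≤
        relPerimeter N s F {x | 0 < x (Fin.last N)}) :
    ∃ x ∈ E, x (Fin.last N) = 0 := by
  exact minimizer_touches_hyperplane_general N s R hs hs' E hEclosed hEsub (by simp [hEvol])
    (by rwa [hEvol])
end

section
/- The potential V_{B_1}(x) = ∫_{B_1^c} |x−y|^{−(N+2s)} dy of the unit ball is a radial function of x ∈ B_1, is strictly increasing in |x| on (0,1), and has the origin as its unique critical point, which is a non-degenerate global minimum. -/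
/-!
The gradient of `V(x) = ∫_A |x - y| ^ (-p) dy`, with `A` the complement of the ball, is computed by
differentiating under the integral sign. In direction `x` its integrand is odd under the point
reflection `y ↦ 2x - y`, so only the points of `A` reflected into the ball contribute, and there the
integrand is positive. Hence `V` increases along rays, which with its rotation invariance gives the
monotonicity and excludes critical points other than the origin. Rotation invariance also makes the
Hessian at the origin a multiple of the identity, so its positivity is that of its trace
`ΔV(0) = p (p + 2 - n) ∫_A |y| ^ (-(p + 2)) dy`, in dimension `n < p`.
-/

open MeasureTheory

/-- The nonlocal potential of the unit ball:
`V_{B_1}(x) = ∫_{B_1ᶜ} |x-y|^{-(N+2s)} dy`. -/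
noncomputable def ballPotential (N : ℕ) (s : ℝ) (x : EuclideanSpace ℝ (Fin N)) : ℝ :=
  ∫ y in (Metric.ball (0 : EuclideanSpace ℝ (Fin N)) 1)ᶜ, ‖x - y‖ ^ (-((N : ℝ) + 2*s))

open Metric Module InnerProductSpace Laplacian
open scoped RealInnerProductSpace

section Kernel

set_option maxSynthPendingDepth 3

variable {E : Type*} [NormedAddCommGroup E]

theorem continuousOn_norm_rpow (r : ℝ) : ContinuousOn (fun u : E ↦ ‖u‖ ^ r) {0}ᶜ :=
  continuous_norm.continuousOn.rpow_const fun _ hu ↦ Or.inl (norm_ne_zero_iff.2 hu)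

variable [InnerProductSpace ℝ E]

/-- The inner product as a bounded bilinear form. The underlying map is `innerSL ℝ`, whose type is
semilinear over the conjugation of `ℝ` and so cannot be added to maps `E →L[ℝ] E →L[ℝ] ℝ`. -/
noncomputable def realInnerL : E →L[ℝ] E →L[ℝ] ℝ := innerSL ℝ

theorem realInnerL_apply (v w : E) : realInnerL v w = ⟪v, w⟫ := rfl

/-- The derivative of `‖u‖ ^ r` at `u ≠ 0`. -/
noncomputable def normRpowFDeriv (r : ℝ) (u : E) : E →L[ℝ] ℝ :=
  (r * ‖u‖ ^ (r - 2)) • innerSL ℝ u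

/-- The second derivative of `‖u‖ ^ r` at `u ≠ 0`, as a map into the dual space. -/
noncomputable def normRpowHessian (r : ℝ) (u : E) : E →L[ℝ] E →L[ℝ] ℝ :=
  (r * ‖u‖ ^ (r - 2)) • realInnerL + (r • normRpowFDeriv (r - 2) u).smulRight (innerSL ℝ u)

theorem normRpowFDeriv_apply (r : ℝ) (u v : E) :
    normRpowFDeriv r u v = r * ‖u‖ ^ (r - 2) * ⟪u, v⟫ := by
  simp [normRpowFDeriv]

theorem normRpowFDeriv_neg (r : ℝ) (u : E) : normRpowFDeriv r (-u) = -normRpowFDeriv r u := by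
  simp [normRpowFDeriv]

theorem normRpowFDeriv_apply_pos_of_neg {r : ℝ} {u v : E} (hr : r < 0) (huv : ⟪u, v⟫ < 0) :
    0 < normRpowFDeriv r u v := by
  have hu : u ≠ 0 := by
    rintro rfl
    simp at huv
  rw [normRpowFDeriv_apply]
  exact mul_pos_of_neg_of_neg (mul_neg_of_neg_of_pos hr (by positivity)) huv

theorem normRpowHessian_apply (r : ℝ) (u v w : E) :
    normRpowHessian r u v w =
      r * ‖u‖ ^ (r - 2) * ⟪v, w⟫ + r * ((r - 2) * ‖u‖ ^ (r - 4)) * ⟪u, v⟫ * ⟪u, w⟫ := by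
  simp only [normRpowHessian, add_apply, smul_apply, ContinuousLinearMap.smulRight_apply,
    realInnerL_apply, normRpowFDeriv_apply, innerSL_apply_apply, smul_eq_mul,
    show r - 2 - 2 = r - 4 by ring]
  ring

theorem hasFDerivAt_norm_rpow_of_ne_zero (r : ℝ) {u : E} (hu : u ≠ 0) :
    HasFDerivAt (fun z : E ↦ ‖z‖ ^ r) (normRpowFDeriv r u) u := by
  have rpow_norm_sq (z : E) (t : ℝ) : (‖z‖ ^ 2) ^ (t / 2) = ‖z‖ ^ t := by
    rw [← Real.rpow_natCast_mul (norm_nonneg z)]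
    congr 1
    push_cast
    ring
  have h := (hasStrictFDerivAt_norm_sq u).hasFDerivAt.rpow_const (p := r / 2)
    (Or.inl (by positivity))
  simp only [rpow_norm_sq, show r / 2 - 1 = (r - 2) / 2 by ring] at h
  refine h.congr_fderiv ?_
  ext v
  simp only [smul_apply, coe_innerSL_apply, nsmul_eq_mul, Nat.cast_ofNat, smul_eq_mul,
    normRpowFDeriv_apply]
  ring

theorem hasFDerivAt_normRpowFDeriv (r : ℝ) {u : E} (hu : u ≠ 0) :
    HasFDerivAt (normRpowFDeriv r) (normRpowHessian r u) u :=
  ((hasFDerivAt_norm_rpow_of_ne_zero (r - 2) hu).const_mul r).smul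
    (realInnerL (E := E)).hasFDerivAt

theorem continuousOn_normRpowFDeriv (r : ℝ) : ContinuousOn (normRpowFDeriv (E := E) r) {0}ᶜ :=
  fun _ hu ↦ (hasFDerivAt_normRpowFDeriv r hu).continuousAt.continuousWithinAt

theorem continuousOn_normRpowHessian (r : ℝ) : ContinuousOn (normRpowHessian (E := E) r) {0}ᶜ :=
  ((continuousOn_const.mul (continuousOn_norm_rpow _)).smul continuousOn_const).add
    (((ContinuousLinearMap.smulRightL ℝ E (E →L[ℝ] ℝ)).continuous.comp_continuousOn
      ((continuousOn_normRpowFDeriv _).const_smul r)).clm_apply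
        (realInnerL (E := E)).continuous.continuousOn)

theorem norm_normRpowFDeriv (r : ℝ) {u : E} (hu : u ≠ 0) :
    ‖normRpowFDeriv r u‖ = |r| * ‖u‖ ^ (r - 1) := by
  rw [normRpowFDeriv, norm_smul, innerSL_apply_norm, norm_mul, Real.norm_eq_abs,
    Real.norm_of_nonneg (by positivity), mul_assoc, ← Real.rpow_add_one (norm_ne_zero_iff.2 hu),
    show r - 2 + 1 = r - 1 by ring]

theorem norm_normRpowHessian_le (r : ℝ) {u : E} (hu : u ≠ 0) :
    ‖normRpowHessian r u‖ ≤ |r| * (1 + |r - 2|) * ‖u‖ ^ (r - 2) := by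
  have h_inner : ‖(r * ‖u‖ ^ (r - 2)) • realInnerL (E := E)‖ ≤
      |r| * ‖u‖ ^ (r - 2) := by
    refine (norm_smul_le _ _).trans ?_
    rw [norm_mul, Real.norm_eq_abs, Real.norm_of_nonneg (by positivity)]
    exact mul_le_of_le_one_right (by positivity) (norm_innerSL_le ℝ)
  have h_outer : ‖(r • normRpowFDeriv (r - 2) u).smulRight (innerSL ℝ u)‖ =
      |r| * |r - 2| * ‖u‖ ^ (r - 2) := by
    rw [ContinuousLinearMap.norm_smulRight_apply, norm_smul, norm_normRpowFDeriv _ hu,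
      innerSL_apply_norm, Real.norm_eq_abs, mul_assoc, mul_assoc,
      ← Real.rpow_add_one (norm_ne_zero_iff.2 hu), sub_add_cancel, mul_assoc]
  calc ‖normRpowHessian r u‖
      ≤ |r| * ‖u‖ ^ (r - 2) + |r| * |r - 2| * ‖u‖ ^ (r - 2) :=
        (norm_add_le _ _).trans (add_le_add h_inner h_outer.le)
    _ = |r| * (1 + |r - 2|) * ‖u‖ ^ (r - 2) := by ring

theorem sum_normRpowHessian_apply_self {ι : Type*} [Fintype ι] (b : OrthonormalBasis ι ℝ E)
    (r : ℝ) {u : E} (hu : u ≠ 0) :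
    ∑ i, normRpowHessian r u (b i) (b i) =
      r * (r - 2 + Fintype.card ι) * ‖u‖ ^ (r - 2) := by
  have rpow_mul_sq : ‖u‖ ^ (r - 4) * ‖u‖ ^ 2 = ‖u‖ ^ (r - 2) := by
    rw [← Real.rpow_add_natCast (norm_ne_zero_iff.2 hu)]
    congr 1
    push_cast
    ring
  calc ∑ i, normRpowHessian r u (b i) (b i)
      = Fintype.card ι * (r * ‖u‖ ^ (r - 2)) +
          r * ((r - 2) * ‖u‖ ^ (r - 4)) * ∑ i, ⟪u, b i⟫ ^ 2 := by
        simp [normRpowHessian_apply, Finset.sum_add_distrib, Finset.mul_sum, mul_assoc, sq]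
    _ = r * (r - 2 + Fintype.card ι) * ‖u‖ ^ (r - 2) := by
        rw [b.sum_sq_inner_left]
        linear_combination r * (r - 2) * rpow_mul_sq

end Kernel

section IntegralOffClosedSet

variable {E F : Type*} [NormedAddCommGroup E] [NormedSpace ℝ E] [FiniteDimensional ℝ E]
  [MeasurableSpace E] [BorelSpace E] {μ : Measure E} [NormedAddCommGroup F]
  {A : Set E} {k : E → F} {C q : ℝ} {x : E}

theorem aestronglyMeasurable_comp_sub_restrict (hA : IsClosed A) (hx : x ∉ A)
    (hk : ContinuousOn k {0}ᶜ) :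
    AEStronglyMeasurable (fun y ↦ k (x - y)) (μ.restrict A) :=
  (hk.comp (by fun_prop) fun _ hy ↦ sub_ne_zero.2 (ne_of_mem_of_not_mem hy hx).symm
    ).aestronglyMeasurable hA.measurableSet

variable [μ.IsAddHaarMeasure]

theorem integrableOn_norm_sub_rpow_neg (hA : IsClosed A) (hx : x ∉ A)
    (hq : (finrank ℝ E : ℝ) < q) : IntegrableOn (fun y ↦ ‖x - y‖ ^ (-q)) A μ := by
  obtain ⟨δ, hδ, hball⟩ := Metric.isOpen_iff.1 hA.isOpen_compl x hx
  have hq₀ : 0 ≤ q := (Nat.cast_nonneg _).trans hq.le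
  have h_int : IntegrableOn (fun y ↦ (δ / (1 + δ)) ^ (-q) * (1 + ‖x - y‖) ^ (-q)) A μ :=
    (((integrable_one_add_norm hq).comp_sub_left x).const_mul _).integrableOn
  have h_meas : Measurable fun y ↦ ‖x - y‖ ^ (-q) := by fun_prop
  refine h_int.mono' h_meas.aestronglyMeasurable
    ((ae_restrict_iff' hA.measurableSet).2 (ae_of_all _ fun y hy ↦ ?_))
  have hδy : δ ≤ ‖x - y‖ := by
    rw [norm_sub_rev, ← dist_eq_norm]
    exact not_lt.1 fun h ↦ hball h hy
  have h_le : δ / (1 + δ) * (1 + ‖x - y‖) ≤ ‖x - y‖ := by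
    rw [div_mul_eq_mul_div, div_le_iff₀ (by positivity)]
    linarith
  rw [Real.norm_of_nonneg (by positivity), ← Real.mul_rpow (by positivity) (by positivity)]
  exact Real.rpow_le_rpow_of_nonpos (by positivity) h_le (neg_nonpos.2 hq₀)

theorem integrableOn_comp_sub (hA : IsClosed A) (hx : x ∉ A) (hq : (finrank ℝ E : ℝ) < q)
    (hk : ContinuousOn k {0}ᶜ) (hk_le : ∀ u ≠ 0, ‖k u‖ ≤ C * ‖u‖ ^ (-q)) :
    IntegrableOn (fun y ↦ k (x - y)) A μ :=
  ((integrableOn_norm_sub_rpow_neg hA hx hq).const_mul C).mono'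
    (aestronglyMeasurable_comp_sub_restrict hA hx hk) ((ae_restrict_iff' hA.measurableSet).2
      (ae_of_all _ fun _ hy ↦ hk_le _ (sub_ne_zero.2 (ne_of_mem_of_not_mem hy hx).symm)))

theorem hasFDerivAt_setIntegral_comp_sub [NormedSpace ℝ F] {k' : E → E →L[ℝ] F}
    (hA : IsClosed A) (hx : x ∉ A) (hq : (finrank ℝ E : ℝ) < q)
    (hk : ∀ u ≠ 0, HasFDerivAt k (k' u) u) (hk_int : IntegrableOn (fun y ↦ k (x - y)) A μ)
    (hk' : ContinuousOn k' {0}ᶜ) (hk'_le : ∀ u ≠ 0, ‖k' u‖ ≤ C * ‖u‖ ^ (-q)) :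
    HasFDerivAt (fun z ↦ ∫ y in A, k (z - y) ∂μ) (∫ y in A, k' (x - y) ∂μ) x := by
  obtain ⟨δ, hδ, hball⟩ := Metric.isOpen_iff.1 hA.isOpen_compl x hx
  have hq₀ : 0 ≤ q := (Nat.cast_nonneg _).trans hq.le
  have h_half : ball x (δ / 2) ⊆ Aᶜ := (ball_subset_ball (half_le_self hδ.le)).trans hball
  have h_ne {y z : E} (hy : y ∈ A) (hz : z ∈ ball x (δ / 2)) : z - y ≠ 0 :=
    sub_ne_zero.2 (ne_of_mem_of_not_mem hy (h_half hz)).symm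
  have h_norm {y z : E} (hy : y ∈ A) (hz : z ∈ ball x (δ / 2)) : ‖x - y‖ / 2 ≤ ‖z - y‖ := by
    have hδy : δ ≤ dist y x := not_lt.1 fun h ↦ hball h hy
    rw [← dist_eq_norm, ← dist_eq_norm]
    linarith [mem_ball.1 hz, dist_triangle_left x y z, dist_comm x y]
  have h_bound {y z : E} (hy : y ∈ A) (hz : z ∈ ball x (δ / 2)) :
      ‖k' (z - y)‖ ≤ |C| * (2⁻¹ ^ (-q) * ‖x - y‖ ^ (-q)) := by
    have hxy : 0 < ‖x - y‖ := norm_pos_iff.2 (h_ne hy (mem_ball_self (half_pos hδ)))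
    calc ‖k' (z - y)‖ ≤ C * ‖z - y‖ ^ (-q) := hk'_le _ (h_ne hy hz)
      _ ≤ |C| * (‖x - y‖ / 2) ^ (-q) := by
        gcongr ?_ * ?_
        · exact le_abs_self C
        · exact Real.rpow_le_rpow_of_nonpos (half_pos hxy) (h_norm hy hz) (neg_nonpos.2 hq₀)
      _ = |C| * (2⁻¹ ^ (-q) * ‖x - y‖ ^ (-q)) := by
        rw [div_eq_inv_mul, Real.mul_rpow (by positivity) hxy.le]
  have hk_cont : ContinuousOn k {0}ᶜ := fun u hu ↦ (hk u hu).continuousAt.continuousWithinAt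
  refine hasFDerivAt_integral_of_dominated_of_fderiv_le (μ := μ.restrict A)
    (F := fun z y ↦ k (z - y)) (F' := fun z y ↦ k' (z - y)) (ball_mem_nhds x (half_pos hδ)) ?_
    hk_int (aestronglyMeasurable_comp_sub_restrict hA hx hk')
    ((ae_restrict_iff' hA.measurableSet).2 (ae_of_all _ fun y hy z hz ↦ h_bound hy hz))
    (((integrableOn_norm_sub_rpow_neg hA hx hq).const_mul _).const_mul _)
    ((ae_restrict_iff' hA.measurableSet).2 (ae_of_all _ fun y hy z hz ↦ ?_))
  · filter_upwards [ball_mem_nhds x (half_pos hδ)] with z hz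
    exact aestronglyMeasurable_comp_sub_restrict hA (h_half hz) hk_cont
  · exact (hk _ (h_ne hy hz)).comp z ((hasFDerivAt_id z).sub_const y)

end IntegralOffClosedSet

section Reflection

variable {α F : Type*} [MeasurableSpace α] {μ : Measure α} {A : Set α}

theorem setIntegral_pos_of_forall_pos {f : α → ℝ} (hA : MeasurableSet A) (hμA : 0 < μ A)
    (hf : ∀ y ∈ A, 0 < f y) (hf_int : IntegrableOn f A μ) : 0 < ∫ y in A, f y ∂μ := by
  rw [setIntegral_pos_iff_support_of_nonneg_ae
    ((ae_restrict_iff' hA).2 (ae_of_all _ fun y hy ↦ (hf y hy).le)) hf_int]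
  have h_support : A ⊆ Function.support f := fun y hy ↦ (hf y hy).ne'
  rwa [Set.inter_eq_right.2 h_support]

theorem setIntegral_eq_setIntegral_diff_of_comp_eq_neg [NormedAddCommGroup F] [NormedSpace ℝ F]
    {σ : α → α} {f : α → F} (hσ : MeasurePreserving σ μ μ) (hσσ : Function.Involutive σ)
    (hA : MeasurableSet A) (hf : ∀ y, f (σ y) = -f y) (hf_int : IntegrableOn f A μ) :
    ∫ y in A, f y ∂μ = ∫ y in A \ σ ⁻¹' A, f y ∂μ := by
  have h_invariant : σ ⁻¹' (A ∩ σ ⁻¹' A) = A ∩ σ ⁻¹' A := by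
    rw [Set.preimage_inter, ← Set.preimage_comp, hσσ.comp_self, Set.preimage_id, Set.inter_comm]
  have h_cancel : ∫ y in A ∩ σ ⁻¹' A, f y ∂μ = 0 := by
    have h := hσ.setIntegral_preimage_emb
      (MeasurableEquiv.ofInvolutive σ hσσ hσ.measurable).measurableEmbedding f (A ∩ σ ⁻¹' A)
    simp only [h_invariant, hf, integral_neg] at h
    have : IsAddTorsionFree F := .of_isTorsionFree ℝ F
    exact self_eq_neg.1 h.symm
  rw [← integral_inter_add_sdiff (hσ.measurable hA) hf_int, h_cancel, zero_add]

end Reflection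

section RotationInvariance

variable {E F : Type*} [NormedAddCommGroup E] [InnerProductSpace ℝ E] [NormedAddCommGroup F]
  [NormedSpace ℝ F]

theorem exists_linearIsometryEquiv_apply_eq {v w : E} (h : ‖v‖ = ‖w‖) :
    ∃ L : E ≃ₗᵢ[ℝ] E, L v = w :=
  ⟨_, Submodule.reflection_sub h⟩

theorem fderiv_fderiv_zero_apply_map {f : E → F} (L : E ≃ₗᵢ[ℝ] E) (hf : ∀ x, f (L x) = f x)
    (v w : E) : fderiv ℝ (fderiv ℝ f) 0 (L v) (L w) = fderiv ℝ (fderiv ℝ f) 0 v w := by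
  have h := L.toContinuousLinearEquiv.iteratedFDerivWithin_comp_right f uniqueDiffOn_univ
    (x := 0) (Set.mem_univ _) 2
  have h_comp : f ∘ L.toContinuousLinearEquiv = f := funext hf
  rw [Set.preimage_univ, h_comp, iteratedFDerivWithin_univ] at h
  simpa [iteratedFDeriv_two_apply] using congr($h.symm ![v, w])

theorem finrank_smul_fderiv_fderiv_zero_apply_self [FiniteDimensional ℝ E] {f : E → F}
    (hf : ∀ (L : E ≃ₗᵢ[ℝ] E) x, f (L x) = f x) (v : E) :
    (finrank ℝ E : ℝ) • fderiv ℝ (fderiv ℝ f) 0 v v = ‖v‖ ^ 2 • Δ f 0 := by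
  set b := stdOrthonormalBasis ℝ E
  have h_rotate (i : Fin (finrank ℝ E)) :
      fderiv ℝ (fderiv ℝ f) 0 v v = ‖v‖ ^ 2 • fderiv ℝ (fderiv ℝ f) 0 (b i) (b i) := by
    obtain ⟨L, hL⟩ : ∃ L : E ≃ₗᵢ[ℝ] E, L v = ‖v‖ • b i :=
      exists_linearIsometryEquiv_apply_eq (by simp [norm_smul])
    rw [← fderiv_fderiv_zero_apply_map L (hf L), hL]
    simp [smul_smul, sq]
  rw [laplacian_eq_iteratedFDeriv_orthonormalBasis f b, Finset.smul_sum]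
  simp [iteratedFDeriv_two_apply, ← h_rotate, Nat.cast_smul_eq_nsmul]

end RotationInvariance

theorem strictMonoOn_comp_smul_of_fderiv_apply_self_pos {E : Type*} [NormedAddCommGroup E]
    [NormedSpace ℝ E] {f : E → ℝ} {S : Set E} (hS : StarConvex ℝ 0 S)
    (hf : ∀ x ∈ S, DifferentiableAt ℝ f x) (hf_pos : ∀ x ∈ S, x ≠ 0 → 0 < fderiv ℝ f x x)
    {y : E} (hy : y ∈ S) (hy₀ : y ≠ 0) :
    StrictMonoOn (fun t : ℝ ↦ f (t • y)) (Set.Icc 0 1) := by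
  have h_deriv (t : ℝ) (ht : t ∈ Set.Icc (0 : ℝ) 1) :
      HasDerivAt (fun t : ℝ ↦ f (t • y)) (fderiv ℝ f (t • y) y) t := by
    have h_smul : HasDerivAt (fun t : ℝ ↦ t • y) y t := by
      simpa using (hasDerivAt_id t).smul_const y
    exact (hf _ (hS.smul_mem hy ht.1 ht.2)).hasFDerivAt.comp_hasDerivAt t h_smul
  refine strictMonoOn_of_deriv_pos (convex_Icc 0 1)
    (fun t ht ↦ (h_deriv t ht).continuousAt.continuousWithinAt) fun t ht ↦ ?_
  rw [interior_Icc] at ht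
  have ht' := Set.Ioo_subset_Icc_self ht
  have h_pos := hf_pos _ (hS.smul_mem hy ht'.1 ht'.2) (smul_ne_zero ht.1.ne' hy₀)
  rw [map_smul, smul_eq_mul] at h_pos
  rw [(h_deriv t ht').deriv]
  exact pos_of_mul_pos_right h_pos ht.1.le

section RieszPotential

set_option maxSynthPendingDepth 3

variable {E : Type*} [NormedAddCommGroup E] [InnerProductSpace ℝ E] [FiniteDimensional ℝ E]
  [MeasurableSpace E] [BorelSpace E] {A : Set E} {p : ℝ} {x : E}

/-- The Riesz-type potential `x ↦ ∫_A |x - y| ^ (-p) dy` of Lebesgue measure on `A`. It is finite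
off a closed set `A` when `p` exceeds the dimension, and then smooth there. -/
noncomputable def rieszPotential (p : ℝ) (A : Set E) (x : E) : ℝ :=
  ∫ y in A, ‖x - y‖ ^ (-p)

theorem rieszPotential_map (p : ℝ) (L : E ≃ₗᵢ[ℝ] E) (hL : L ⁻¹' A = A) (x : E) :
    rieszPotential p A (L x) = rieszPotential p A x := by
  calc ∫ y in A, ‖L x - y‖ ^ (-p)
      = ∫ y in L ⁻¹' A, ‖L x - L y‖ ^ (-p) :=
        (L.measurePreserving.setIntegral_preimage_emb L.toHomeomorph.measurableEmbedding _ _).symm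
    _ = ∫ y in A, ‖x - y‖ ^ (-p) := by simp only [hL, ← map_sub, L.norm_map]

theorem integrableOn_normRpowFDeriv_sub (hA : IsClosed A) (hx : x ∉ A)
    (hp : (finrank ℝ E : ℝ) < p) : IntegrableOn (fun y ↦ normRpowFDeriv (-p) (x - y)) A :=
  integrableOn_comp_sub hA hx (q := p + 1) (by linarith) (continuousOn_normRpowFDeriv _)
    fun u hu ↦ by rw [norm_normRpowFDeriv _ hu, neg_add']

theorem integrableOn_normRpowHessian_sub (hA : IsClosed A) (hx : x ∉ A)
    (hp : (finrank ℝ E : ℝ) < p) : IntegrableOn (fun y ↦ normRpowHessian (-p) (x - y)) A :=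
  integrableOn_comp_sub hA hx (q := p + 2) (by linarith) (continuousOn_normRpowHessian _)
    fun u hu ↦ by simpa only [neg_add'] using norm_normRpowHessian_le (-p) hu

theorem hasFDerivAt_rieszPotential (hA : IsClosed A) (hx : x ∉ A) (hp : (finrank ℝ E : ℝ) < p) :
    HasFDerivAt (rieszPotential p A) (∫ y in A, normRpowFDeriv (-p) (x - y)) x :=
  hasFDerivAt_setIntegral_comp_sub hA hx (q := p + 1) (by linarith)
    (fun _ hu ↦ hasFDerivAt_norm_rpow_of_ne_zero _ hu) (integrableOn_norm_sub_rpow_neg hA hx hp)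
    (continuousOn_normRpowFDeriv _) fun u hu ↦ by rw [norm_normRpowFDeriv _ hu, neg_add']

theorem hasFDerivAt_fderiv_rieszPotential (hA : IsClosed A) (hx : x ∉ A)
    (hp : (finrank ℝ E : ℝ) < p) :
    HasFDerivAt (fderiv ℝ (rieszPotential p A)) (∫ y in A, normRpowHessian (-p) (x - y)) x := by
  have h_fderiv : fderiv ℝ (rieszPotential p A) =ᶠ[nhds x]
      fun z ↦ ∫ y in A, normRpowFDeriv (-p) (z - y) := by
    filter_upwards [hA.isOpen_compl.mem_nhds hx] with z hz
    exact (hasFDerivAt_rieszPotential hA hz hp).fderiv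
  refine HasFDerivAt.congr_of_eventuallyEq ?_ h_fderiv
  exact hasFDerivAt_setIntegral_comp_sub hA hx (q := p + 2) (by linarith)
    (fun _ hu ↦ hasFDerivAt_normRpowFDeriv _ hu) (integrableOn_normRpowFDeriv_sub hA hx hp)
    (continuousOn_normRpowHessian _)
    fun u hu ↦ by simpa only [neg_add'] using norm_normRpowHessian_le (-p) hu

theorem fderiv_rieszPotential_apply (hA : IsClosed A) (hx : x ∉ A)
    (hp : (finrank ℝ E : ℝ) < p) (v : E) :
    fderiv ℝ (rieszPotential p A) x v = ∫ y in A, normRpowFDeriv (-p) (x - y) v := by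
  rw [(hasFDerivAt_rieszPotential hA hx hp).fderiv,
    ContinuousLinearMap.integral_apply (integrableOn_normRpowFDeriv_sub hA hx hp)]

theorem laplacian_rieszPotential (hA : IsClosed A) (hx : x ∉ A) (hp : (finrank ℝ E : ℝ) < p) :
    Δ (rieszPotential p A) x =
      p * (p + 2 - finrank ℝ E) * ∫ y in A, ‖x - y‖ ^ (-(p + 2)) := by
  set b := stdOrthonormalBasis ℝ E
  have h_int := integrableOn_normRpowHessian_sub hA hx hp
  calc Δ (rieszPotential p A) x
      = ∑ i, (∫ y in A, normRpowHessian (-p) (x - y)) (b i) (b i) := by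
        simp [laplacian_eq_iteratedFDeriv_orthonormalBasis _ b, iteratedFDeriv_two_apply,
          (hasFDerivAt_fderiv_rieszPotential hA hx hp).fderiv]
    _ = ∑ i, ∫ y in A, normRpowHessian (-p) (x - y) (b i) (b i) := by
        refine Finset.sum_congr rfl fun i _ ↦ ?_
        rw [ContinuousLinearMap.integral_apply h_int,
          ContinuousLinearMap.integral_apply (h_int.apply_continuousLinearMap _)]
    _ = ∫ y in A, ∑ i, normRpowHessian (-p) (x - y) (b i) (b i) :=
        (integral_finsetSum _ fun i _ ↦
          (h_int.apply_continuousLinearMap _).apply_continuousLinearMap _).symm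
    _ = ∫ y in A, p * (p + 2 - finrank ℝ E) * ‖x - y‖ ^ (-(p + 2)) := by
        refine setIntegral_congr_fun hA.measurableSet fun y hy ↦ ?_
        have hxy : x - y ≠ 0 := sub_ne_zero.2 (ne_of_mem_of_not_mem hy hx).symm
        simp only [sum_normRpowHessian_apply_self b _ hxy, Fintype.card_fin, ← neg_add']
        ring
    _ = p * (p + 2 - finrank ℝ E) * ∫ y in A, ‖x - y‖ ^ (-(p + 2)) :=
        integral_const_mul _ _

theorem fderiv_rieszPotential_apply_eq_setIntegral_diff (hA : IsClosed A) (hx : x ∉ A)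
    (hp : (finrank ℝ E : ℝ) < p) (v : E) :
    fderiv ℝ (rieszPotential p A) x v =
      ∫ y in A \ (fun y ↦ x + x - y) ⁻¹' A, normRpowFDeriv (-p) (x - y) v := by
  rw [fderiv_rieszPotential_apply hA hx hp]
  refine setIntegral_eq_setIntegral_diff_of_comp_eq_neg (volume.measurePreserving_sub_left (x + x))
    (fun y ↦ sub_sub_cancel _ y) hA.measurableSet (fun y ↦ ?_)
    ((integrableOn_normRpowFDeriv_sub hA hx hp).apply_continuousLinearMap v)
  rw [show x - (x + x - y) = -(x - y) by abel, normRpowFDeriv_neg, neg_apply]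

theorem fderiv_rieszPotential_apply_pos (hA : IsClosed A) (hx : x ∉ A)
    (hp : (finrank ℝ E : ℝ) < p) {v : E} (h_vol : 0 < volume (A \ (fun y ↦ x + x - y) ⁻¹' A))
    (h_inner : ∀ y ∈ A, x + x - y ∉ A → ⟪x - y, v⟫ < 0) :
    0 < fderiv ℝ (rieszPotential p A) x v := by
  have hp₀ : 0 < p := (Nat.cast_nonneg _).trans_lt hp
  have h_reflect : Measurable fun y ↦ x + x - y := by fun_prop
  rw [fderiv_rieszPotential_apply_eq_setIntegral_diff hA hx hp]
  exact setIntegral_pos_of_forall_pos (hA.measurableSet.diff (h_reflect hA.measurableSet)) h_vol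
    (fun y hy ↦ normRpowFDeriv_apply_pos_of_neg (neg_neg_of_pos hp₀) (h_inner y hy.1 hy.2))
    (((integrableOn_normRpowFDeriv_sub hA hx hp).mono_set
      Set.sdiff_subset).apply_continuousLinearMap v)

end RieszPotential

section BallComplement

variable {E : Type*} [NormedAddCommGroup E] [InnerProductSpace ℝ E]

theorem norm_sq_sub_norm_reflect_sq (x y : E) :
    ‖x + x - y‖ ^ 2 - ‖y‖ ^ 2 = 4 * ⟪x - y, x⟫ := by
  rw [norm_sub_sq_real, ← two_smul ℝ x, norm_smul, inner_smul_left, inner_sub_left,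
    real_inner_self_eq_norm_sq, real_inner_comm x y]
  simp only [Real.norm_ofNat, Real.ringHom_apply]
  ring

theorem exists_lt_norm_and_norm_reflect_lt {R : ℝ} {x : E} (hx : ‖x‖ < R) (hx₀ : x ≠ 0) :
    ∃ y : E, R < ‖y‖ ∧ ‖x + x - y‖ < R := by
  have hx_pos : 0 < ‖x‖ := norm_pos_iff.2 hx₀
  have hR : 0 < R := hx_pos.trans hx
  have h_norm : ‖(R / ‖x‖) • x‖ = R := by
    rw [norm_smul, Real.norm_of_nonneg (by positivity), div_mul_cancel₀ _ hx_pos.ne']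
  refine ⟨x + (R / ‖x‖) • x, ?_, ?_⟩
  · rw [(SameRay.sameRay_nonneg_smul_right x (by positivity)).norm_add, h_norm]
    linarith
  · rw [add_sub_add_left_eq_sub, (SameRay.sameRay_nonneg_smul_right x (by positivity)).norm_sub,
      h_norm, abs_sub_lt_iff]
    constructor <;> linarith

variable [FiniteDimensional ℝ E] [MeasurableSpace E] [BorelSpace E] {p R : ℝ} {x y : E}

theorem volume_compl_ball_diff_reflect_pos (hx : x ∈ ball 0 R) (hx₀ : x ≠ 0) :
    0 < volume ((ball (0 : E) R)ᶜ \ (fun y ↦ x + x - y) ⁻¹' (ball 0 R)ᶜ) := by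
  have h_open : IsOpen {y : E | R < ‖y‖ ∧ ‖x + x - y‖ < R} :=
    (isOpen_lt continuous_const continuous_norm).inter
      (isOpen_lt (continuous_const.sub continuous_id).norm continuous_const)
  refine (h_open.measure_pos volume
    (exists_lt_norm_and_norm_reflect_lt (mem_ball_zero_iff.1 hx) hx₀)).trans_le
    (measure_mono fun y hy ↦ ?_)
  simpa using ⟨hy.1.le, hy.2⟩

theorem fderiv_rieszPotential_compl_ball_apply_self_pos (hp : (finrank ℝ E : ℝ) < p)
    (hx : x ∈ ball 0 R) (hx₀ : x ≠ 0) :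
    0 < fderiv ℝ (rieszPotential p (ball (0 : E) R)ᶜ) x x := by
  refine fderiv_rieszPotential_apply_pos isOpen_ball.isClosed_compl (Set.notMem_compl_iff.2 hx) hp
    (volume_compl_ball_diff_reflect_pos hx hx₀) fun y hy h_reflect ↦ ?_
  rw [Set.mem_compl_iff, mem_ball_zero_iff, not_lt] at hy
  rw [Set.notMem_compl_iff, mem_ball_zero_iff] at h_reflect
  have h_sq : ‖x + x - y‖ ^ 2 < ‖y‖ ^ 2 := by gcongr; exact h_reflect.trans_le hy
  linarith [norm_sq_sub_norm_reflect_sq x y]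

theorem rieszPotential_compl_ball_map (p R : ℝ) (L : E ≃ₗᵢ[ℝ] E) (x : E) :
    rieszPotential p (ball 0 R)ᶜ (L x) = rieszPotential p (ball 0 R)ᶜ x :=
  rieszPotential_map p L (by ext; simp) x

theorem rieszPotential_compl_ball_eq_of_norm_eq (p R : ℝ) (h : ‖x‖ = ‖y‖) :
    rieszPotential p (ball 0 R)ᶜ x = rieszPotential p (ball 0 R)ᶜ y := by
  obtain ⟨L, rfl⟩ := exists_linearIsometryEquiv_apply_eq h
  exact (rieszPotential_compl_ball_map p R L x).symm

theorem rieszPotential_compl_ball_lt_of_norm_lt (hp : (finrank ℝ E : ℝ) < p) (hy : y ∈ ball 0 R)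
    (h : ‖x‖ < ‖y‖) : rieszPotential p (ball 0 R)ᶜ x < rieszPotential p (ball 0 R)ᶜ y := by
  have hy_pos : 0 < ‖y‖ := (norm_nonneg x).trans_lt h
  have h_mono := strictMonoOn_comp_smul_of_fderiv_apply_self_pos
    ((convex_ball (0 : E) R).starConvex (mem_ball_self (pos_of_mem_ball hy)))
    (fun z hz ↦ (hasFDerivAt_rieszPotential isOpen_ball.isClosed_compl
      (Set.notMem_compl_iff.2 hz) hp).differentiableAt)
    (fun z ↦ fderiv_rieszPotential_compl_ball_apply_self_pos hp) hy (norm_pos_iff.1 hy_pos)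
  have h_ratio : ‖x‖ / ‖y‖ < 1 := (div_lt_one hy_pos).2 h
  calc rieszPotential p (ball 0 R)ᶜ x
      = rieszPotential p (ball 0 R)ᶜ ((‖x‖ / ‖y‖) • y) :=
        rieszPotential_compl_ball_eq_of_norm_eq p R (by
          rw [norm_smul, Real.norm_of_nonneg (by positivity), div_mul_cancel₀ _ hy_pos.ne'])
    _ < rieszPotential p (ball 0 R)ᶜ ((1 : ℝ) • y) :=
        h_mono ⟨by positivity, h_ratio.le⟩ (Set.right_mem_Icc.2 zero_le_one) h_ratio
    _ = rieszPotential p (ball 0 R)ᶜ y := by rw [one_smul]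

theorem rieszPotential_compl_ball_zero_le (hp : (finrank ℝ E : ℝ) < p) (hx : x ∈ ball 0 R) :
    rieszPotential p (ball (0 : E) R)ᶜ 0 ≤ rieszPotential p (ball 0 R)ᶜ x := by
  rcases eq_or_ne x 0 with rfl | hx₀
  · exact le_rfl
  · exact (rieszPotential_compl_ball_lt_of_norm_lt hp hx (by simpa using hx₀)).le

theorem fderiv_rieszPotential_compl_ball_zero (hp : (finrank ℝ E : ℝ) < p) (hR : 0 < R) :
    fderiv ℝ (rieszPotential p (ball (0 : E) R)ᶜ) 0 = 0 :=
  IsLocalMin.fderiv_eq_zero <| by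
    filter_upwards [ball_mem_nhds 0 hR] with x hx
    exact rieszPotential_compl_ball_zero_le hp hx

theorem volume_compl_ball_pos [Nontrivial E] (R : ℝ) : 0 < volume (ball (0 : E) R)ᶜ := by
  obtain ⟨y, hy⟩ := NormedSpace.exists_lt_norm ℝ E R
  refine ((isOpen_lt continuous_const continuous_norm).measure_pos volume ⟨y, hy⟩).trans_le
    (measure_mono fun z (hz : R < ‖z‖) ↦ ?_)
  simpa using hz.le

theorem laplacian_rieszPotential_compl_ball_zero_pos [Nontrivial E]
    (hp : (finrank ℝ E : ℝ) < p) (hR : 0 < R) :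
    0 < Δ (rieszPotential p (ball (0 : E) R)ᶜ) 0 := by
  have hp₀ : 0 < p := (Nat.cast_nonneg _).trans_lt hp
  have h_closed : IsClosed (ball (0 : E) R)ᶜ := isOpen_ball.isClosed_compl
  have h_zero : (0 : E) ∉ (ball (0 : E) R)ᶜ := Set.notMem_compl_iff.2 (mem_ball_self hR)
  rw [laplacian_rieszPotential h_closed h_zero hp]
  refine mul_pos (mul_pos hp₀ (by linarith)) (setIntegral_pos_of_forall_pos
    h_closed.measurableSet (volume_compl_ball_pos R) (fun y hy ↦ ?_)
    (integrableOn_norm_sub_rpow_neg h_closed h_zero (by linarith)))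
  have hy₀ : 0 - y ≠ 0 := sub_ne_zero.2 (ne_of_mem_of_not_mem hy h_zero).symm
  positivity

theorem hessian_rieszPotential_compl_ball_zero_pos (hp : (finrank ℝ E : ℝ) < p) (hR : 0 < R)
    {v : E} (hv : v ≠ 0) :
    0 < fderiv ℝ (fderiv ℝ (rieszPotential p (ball (0 : E) R)ᶜ)) 0 v v := by
  have : Nontrivial E := nontrivial_of_ne v 0 hv
  have h_laplacian := laplacian_rieszPotential_compl_ball_zero_pos hp hR
  have h_trace := finrank_smul_fderiv_fderiv_zero_apply_self
    (rieszPotential_compl_ball_map (E := E) p R) v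
  refine pos_of_mul_pos_right (a := (finrank ℝ E : ℝ)) ?_ (Nat.cast_nonneg _)
  rw [← smul_eq_mul, h_trace, smul_eq_mul]
  positivity

end BallComplement

theorem ballPotential_radial_monotone_unique_critical_general {E : Type*} [NormedAddCommGroup E]
    [InnerProductSpace ℝ E] [FiniteDimensional ℝ E] [MeasurableSpace E] [BorelSpace E] {p R : ℝ}
    (hp : (finrank ℝ E : ℝ) < p) (hR : 0 < R) :
    (∀ x y : E, x ∈ ball 0 R → y ∈ ball 0 R → ‖x‖ = ‖y‖ →
      rieszPotential p (ball 0 R)ᶜ x = rieszPotential p (ball 0 R)ᶜ y) ∧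
    (∀ x y : E, x ∈ ball 0 R → y ∈ ball 0 R → ‖x‖ < ‖y‖ →
      rieszPotential p (ball 0 R)ᶜ x < rieszPotential p (ball 0 R)ᶜ y) ∧
    (∀ x ∈ ball (0 : E) R,
      rieszPotential p (ball (0 : E) R)ᶜ 0 ≤ rieszPotential p (ball 0 R)ᶜ x) ∧
    fderiv ℝ (rieszPotential p (ball (0 : E) R)ᶜ) 0 = 0 ∧
    (∀ x ∈ ball (0 : E) R, fderiv ℝ (rieszPotential p (ball 0 R)ᶜ) x = 0 → x = 0) ∧
    (∀ v : E, v ≠ 0 → 0 < fderiv ℝ (fderiv ℝ (rieszPotential p (ball (0 : E) R)ᶜ)) 0 v v) := by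
  refine ⟨fun x y _ _ ↦ rieszPotential_compl_ball_eq_of_norm_eq p R,
    fun x y _ ↦ rieszPotential_compl_ball_lt_of_norm_lt hp,
    fun x ↦ rieszPotential_compl_ball_zero_le hp,
    fderiv_rieszPotential_compl_ball_zero hp hR, fun x hx h_crit ↦ ?_,
    fun v ↦ hessian_rieszPotential_compl_ball_zero_pos hp hR⟩
  by_contra hx₀
  have h_pos := fderiv_rieszPotential_compl_ball_apply_self_pos hp hx hx₀
  rw [h_crit, zero_apply] at h_pos
  exact h_pos.false

/-- the potential `V_{B_1}` is a radial function on the unit ball, strictly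
increasing in `|x|`, the origin is its unique critical point, and it is a non-degenerate
global minimum. -/
theorem ballPotential_radial_monotone_unique_critical
    (N : ℕ) (hN : 0 < N) (s : ℝ) (hs : 0 < s) (hs' : s < 1/2) :
    -- radial
    (∀ x y : EuclideanSpace ℝ (Fin N), x ∈ Metric.ball 0 1 → y ∈ Metric.ball 0 1 →
      ‖x‖ = ‖y‖ → ballPotential N s x = ballPotential N s y) ∧
    -- strictly increasing in the radius
    (∀ x y : EuclideanSpace ℝ (Fin N), x ∈ Metric.ball 0 1 → y ∈ Metric.ball 0 1 →
      ‖x‖ < ‖y‖ → ballPotential N s x < ballPotential N s y) ∧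
    -- the origin is a global minimum
    (∀ x ∈ Metric.ball (0 : EuclideanSpace ℝ (Fin N)) 1,
      ballPotential N s 0 ≤ ballPotential N s x) ∧
    -- the origin is the unique critical point in the ball
    (fderiv ℝ (ballPotential N s) 0 = 0) ∧
    (∀ x ∈ Metric.ball (0 : EuclideanSpace ℝ (Fin N)) 1,
      fderiv ℝ (ballPotential N s) x = 0 → x = 0) ∧
    -- non-degeneracy: the Hessian at the origin is positive definite
    (∀ v : EuclideanSpace ℝ (Fin N), v ≠ 0 →
      0 < fderiv ℝ (fun z => fderiv ℝ (ballPotential N s) z) 0 v v) :=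
  ballPotential_radial_monotone_unique_critical_general
    (by rw [finrank_euclideanSpace_fin]; linarith) one_pos
end

section
/- Fractional isoperimetric inequality (statement): for every measurable E ⊂ ℝ^N with 0 < |E| < ∞ and s ∈ (0,1/2), P_s(E) ≥ P_s(B_1) |B_1|^{−(N−2s)/N} |E|^{(N−2s)/N}, i.e. among sets of given volume, balls minimize the fractional s-perimeter. -/
open MeasureTheory ENNReal

/-- The fractional `s`-perimeter `P_s(E) = ∫_E ∫_{Eᶜ} |x-y|^{-(N+2s)} dx dy`. -/
noncomputable def fracPerimeter (N : ℕ) (s : ℝ) (E : Set (EuclideanSpace ℝ (Fin N))) :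
    ℝ≥0∞ :=
  ∫⁻ x in E, ∫⁻ y in Eᶜ, ENNReal.ofReal (‖x - y‖ ^ (-((N : ℝ) + 2*s)))

/-!
Polarization in the perpendicular bisector of the segment from `0` to `p` moves mass towards the
origin: it preserves volume and never decreases the energy `∫_E ∫_E k(|x - y|)` of a decreasing
kernel `k`. Let `B` be the ball centered at `0` with the volume of a bounded set `E`. If `F` is
obtained from `E` by polarizations and `|F \ B|` is not small, then neither is `|B \ F|`, and
averaging over `p` yields a bisector that reflects a portion of `B \ F` of volume bounded below into
`F \ B`; polarizing in it decreases `|F \ B|` by that amount. Hence iterated polarizations make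
`|F \ B|` arbitrarily small, so the energy of `E` is at most that of `B` when `k` is integrable.

The energy and the perimeter of `E` add up to `|E| ∫ k`, so for integrable `k` the ball minimizes
the perimeter. The kernel `|x - y|^(-a)` is the increasing limit of its truncations, to which this
applies, and its homogeneity turns the comparison with `B` into one with the unit ball.
-/

open Set Metric
open scoped NNReal InnerProductSpace Pointwise

section Reflection

variable {V : Type*} [NormedAddCommGroup V] [InnerProductSpace ℝ V]

/-- The reflection in the perpendicular bisector of the segment from `0` to `p`. It is written as a
linear reflection followed by a translation, so that it is the identity when `p = 0`. -/
noncomputable def bisectorReflection (p x : V) : V := (ℝ ∙ p)ᗮ.reflection x + p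

/-- The affine function `x ↦ ‖p‖² - 2⟪x, p⟫`, which vanishes on the perpendicular bisector of the
segment from `0` to `p` and is nonnegative on the side containing `0`. -/
def bisectorHeight (p x : V) : ℝ := ‖p‖ ^ 2 - 2 * ⟪x, p⟫_ℝ

lemma reflection_orthogonal_span_singleton_apply (p x : V) :
    (ℝ ∙ p)ᗮ.reflection x = x - (2 * (⟪x, p⟫_ℝ / ‖p‖ ^ 2)) • p := by
  rw [Submodule.reflection_orthogonal_apply, Submodule.reflection_singleton_apply,
    real_inner_comm, neg_sub, two_nsmul, two_mul, add_smul]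
  rfl

lemma bisectorReflection_eq_add_smul (p x : V) :
    bisectorReflection p x = x + (bisectorHeight p x / ‖p‖ ^ 2) • p := by
  rcases eq_or_ne p 0 with rfl | hp
  · simp [bisectorReflection, Submodule.reflection_eq_self_iff]
  have hp' : ‖p‖ ^ 2 ≠ 0 := by simpa using hp
  rw [bisectorReflection, reflection_orthogonal_span_singleton_apply, bisectorHeight, sub_div,
    div_self hp', mul_div_assoc]
  module

@[simp]
lemma bisectorReflection_bisectorReflection (p x : V) :
    bisectorReflection p (bisectorReflection p x) = x := by
  simp [bisectorReflection, Submodule.reflection_orthogonalComplement_singleton_eq_neg]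

@[simp]
lemma edist_bisectorReflection_bisectorReflection (p x y : V) :
    edist (bisectorReflection p x) (bisectorReflection p y) = edist x y := by
  simp [bisectorReflection]

@[simp]
lemma bisectorHeight_bisectorReflection (p x : V) :
    bisectorHeight p (bisectorReflection p x) = -bisectorHeight p x := by
  have h := (ℝ ∙ p)ᗮ.reflection.inner_map_map x p
  rw [Submodule.reflection_orthogonalComplement_singleton_eq_neg, inner_neg_right] at h
  rw [bisectorReflection, bisectorHeight, bisectorHeight, inner_add_left,
    real_inner_self_eq_norm_sq]
  linarith

lemma norm_sub_bisectorReflection_sq (p x y : V) :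
    ‖x - bisectorReflection p y‖ ^ 2 =
      ‖x - y‖ ^ 2 + bisectorHeight p x * bisectorHeight p y / ‖p‖ ^ 2 := by
  rcases eq_or_ne p 0 with rfl | hp
  · simp [bisectorReflection_eq_add_smul]
  have hp' : ‖p‖ ≠ 0 := norm_ne_zero_iff.2 hp
  rw [bisectorReflection_eq_add_smul, ← sub_sub, norm_sub_sq_real, inner_smul_right, norm_smul,
    inner_sub_left, mul_pow, Real.norm_eq_abs, sq_abs]
  simp only [bisectorHeight]
  field_simp
  ring

lemma norm_sub_le_norm_sub_bisectorReflection {p x y : V} (hx : 0 ≤ bisectorHeight p x)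
    (hy : 0 ≤ bisectorHeight p y) : ‖x - y‖ ≤ ‖x - bisectorReflection p y‖ := by
  rw [← sq_le_sq₀ (norm_nonneg _) (norm_nonneg _), norm_sub_bisectorReflection_sq]
  exact le_add_of_nonneg_right (by positivity)

lemma norm_le_norm_bisectorReflection {p x : V} (hx : 0 ≤ bisectorHeight p x) :
    ‖x‖ ≤ ‖bisectorReflection p x‖ := by
  have h0 : 0 ≤ bisectorHeight p 0 := by simp [bisectorHeight]
  simpa using norm_sub_le_norm_sub_bisectorReflection h0 hx

lemma bisectorHeight_nonneg_of_norm_lt {p x : V} (hx : ‖x‖ < ‖bisectorReflection p x‖) :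
    0 ≤ bisectorHeight p x := by
  by_contra! h
  have hle := norm_le_norm_bisectorReflection (p := p) (x := bisectorReflection p x)
    (by simpa using h.le)
  rw [bisectorReflection_bisectorReflection] at hle
  exact hle.not_gt hx

lemma norm_bisectorReflection_le (p x : V) : ‖bisectorReflection p x‖ ≤ ‖x‖ + ‖p‖ := by
  simpa [bisectorReflection] using norm_add_le ((ℝ ∙ p)ᗮ.reflection x) p

lemma norm_le_norm_add_norm_bisectorReflection (p x : V) :
    ‖p‖ ≤ ‖x‖ + ‖bisectorReflection p x‖ := by
  simpa [bisectorReflection, add_comm] using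
    norm_sub_le (bisectorReflection p x) ((ℝ ∙ p)ᗮ.reflection x)

lemma exists_bisectorReflection_eq {x y : V} (h : ‖x‖ ≠ ‖y‖) :
    ∃ p, bisectorReflection p x = y := by
  have hxy : ‖y - x‖ ≠ 0 := norm_ne_zero_iff.2 <| sub_ne_zero.2 fun e ↦ h (e ▸ rfl)
  have hsq : ‖y‖ ^ 2 - ‖x‖ ^ 2 ≠ 0 :=
    sub_ne_zero.2 fun e ↦ h ((sq_eq_sq₀ (norm_nonneg _) (norm_nonneg _)).1 e).symm
  have hinner : 2 * ⟪x, y - x⟫_ℝ = ‖y‖ ^ 2 - ‖x‖ ^ 2 - ‖y - x‖ ^ 2 := by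
    have := norm_add_sq_real x (y - x)
    rw [add_sub_cancel] at this
    linarith
  refine ⟨((‖y‖ ^ 2 - ‖x‖ ^ 2) / ‖y - x‖ ^ 2) • (y - x), ?_⟩
  rw [bisectorReflection_eq_add_smul, bisectorHeight, smul_smul, inner_smul_right, mul_left_comm,
    hinner, norm_smul, mul_pow, Real.norm_eq_abs, sq_abs, ← eq_sub_iff_add_eq']
  convert one_smul ℝ (y - x) using 2
  field_simp
  ring

lemma norm_projection_sub_projection_le (x : V) {p q : V} (hp : p ≠ 0) (hq : q ≠ 0) :
    ‖(⟪x, p⟫_ℝ / ‖p‖ ^ 2) • p - (⟪x, q⟫_ℝ / ‖q‖ ^ 2) • q‖ ≤ 2 * ‖x‖ / ‖p‖ * ‖p - q‖ := by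
  have hp' : ‖p‖ ≠ 0 := norm_ne_zero_iff.2 hp
  have hq' : ‖q‖ ≠ 0 := norm_ne_zero_iff.2 hq
  have hinv : ‖(1 / ‖p‖) ^ 2 • p - (1 / ‖q‖) ^ 2 • q‖ = 1 / (‖p‖ * ‖q‖) * ‖p - q‖ := by
    simpa [dist_eq_norm] using dist_div_norm_sq_smul hp hq 1
  have hsplit : (⟪x, p⟫_ℝ / ‖p‖ ^ 2) • p - (⟪x, q⟫_ℝ / ‖q‖ ^ 2) • q =
      (⟪x, p - q⟫_ℝ / ‖p‖ ^ 2) • p + ⟪x, q⟫_ℝ • ((1 / ‖p‖) ^ 2 • p - (1 / ‖q‖) ^ 2 • q) := by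
    rw [inner_sub_right]
    module
  calc _ ≤ ‖(⟪x, p - q⟫_ℝ / ‖p‖ ^ 2) • p‖ +
        ‖⟪x, q⟫_ℝ • ((1 / ‖p‖) ^ 2 • p - (1 / ‖q‖) ^ 2 • q)‖ := hsplit ▸ norm_add_le _ _
    _ = |⟪x, p - q⟫_ℝ| / ‖p‖ ^ 2 * ‖p‖ + |⟪x, q⟫_ℝ| * (1 / (‖p‖ * ‖q‖) * ‖p - q‖) := by
      rw [norm_smul, norm_smul, hinv, norm_div, norm_pow, norm_norm, Real.norm_eq_abs,
        Real.norm_eq_abs]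
    _ ≤ ‖x‖ * ‖p - q‖ / ‖p‖ ^ 2 * ‖p‖ + ‖x‖ * ‖q‖ * (1 / (‖p‖ * ‖q‖) * ‖p - q‖) := by
      gcongr <;> exact abs_real_inner_le_norm _ _
    _ = 2 * ‖x‖ / ‖p‖ * ‖p - q‖ := by
      field_simp
      ring

lemma lipschitzOnWith_bisectorReflection {η ρ : ℝ≥0} (hη : 0 < η) {x : V} (hx : ‖x‖ ≤ ρ) :
    LipschitzOnWith (1 + 4 * ρ / η) (fun p ↦ bisectorReflection p x) {p | η ≤ ‖p‖} := by
  refine LipschitzOnWith.of_dist_le_mul fun p (hp : η ≤ ‖p‖) q (hq : η ≤ ‖q‖) ↦ ?_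
  have hη' : (0 : ℝ) < η := hη
  have hp0 : p ≠ 0 := norm_pos_iff.1 (hη'.trans_le hp)
  have hq0 : q ≠ 0 := norm_pos_iff.1 (hη'.trans_le hq)
  have hsplit : bisectorReflection p x - bisectorReflection q x =
      (p - q) - (2 : ℝ) • ((⟪x, p⟫_ℝ / ‖p‖ ^ 2) • p - (⟪x, q⟫_ℝ / ‖q‖ ^ 2) • q) := by
    simp only [bisectorReflection, reflection_orthogonal_span_singleton_apply]
    module
  rw [dist_eq_norm, dist_eq_norm]
  calc ‖bisectorReflection p x - bisectorReflection q x‖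
      ≤ ‖p - q‖ + 2 * (2 * ‖x‖ / ‖p‖ * ‖p - q‖) := by
        rw [hsplit]
        refine (norm_sub_le _ _).trans ?_
        rw [norm_smul, Real.norm_two]
        gcongr
        exact norm_projection_sub_projection_le x hp0 hq0
    _ ≤ ‖p - q‖ + 2 * (2 * ρ / η * ‖p - q‖) := by gcongr
    _ = ↑(1 + 4 * ρ / η) * ‖p - q‖ := by
        push_cast
        ring

end Reflection

section Interaction

variable {X : Type*} [PseudoEMetricSpace X] [MeasureSpace X]

/-- The interaction energy `∫_E ∫_F k(|x - y|) dy dx` of two sets with respect to a kernel `k` of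
the distance; the kernel takes extended distances as arguments so that it may be singular at `0`. -/
noncomputable def interaction (k : ℝ≥0∞ → ℝ≥0∞) (E F : Set X) : ℝ≥0∞ :=
  ∫⁻ x in E, ∫⁻ y in F, k (edist x y)

/-- The nonlocal perimeter `∫_E ∫_{Eᶜ} k(|x - y|) dy dx` of `E` with respect to the kernel `k`. -/
noncomputable def nonlocalPerimeter (k : ℝ≥0∞ → ℝ≥0∞) (E : Set X) : ℝ≥0∞ :=
  interaction k E Eᶜ

variable {k : ℝ≥0∞ → ℝ≥0∞}

lemma interaction_mono {E E' F F' : Set X} (hE : E ⊆ E') (hF : F ⊆ F') :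
    interaction k E F ≤ interaction k E' F' :=
  (lintegral_mono_set hE).trans <| lintegral_mono fun _ ↦ lintegral_mono_set hF

lemma interaction_union_left_le (E E' F : Set X) :
    interaction k (E ∪ E') F ≤ interaction k E F + interaction k E' F :=
  lintegral_union_le _ _ _

lemma lintegral_indicator_mul_indicator_mul_edist {E F : Set X} (hE : MeasurableSet E)
    (hF : MeasurableSet F) :
    ∫⁻ x, ∫⁻ y, E.indicator 1 x * F.indicator 1 y * k (edist x y) = interaction k E F := by
  have hout (x y : X) :
      F.indicator 1 y * k (edist x y) = F.indicator (fun y ↦ k (edist x y)) y := by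
    by_cases h : y ∈ F <;> simp [h]
  have hin (x : X) : ∫⁻ y, E.indicator 1 x * F.indicator 1 y * k (edist x y) =
      E.indicator (fun x ↦ ∫⁻ y in F, k (edist x y)) x := by
    by_cases h : x ∈ E
    · simp [h, hout, ← lintegral_indicator hF]
    · simp [h]
  simp_rw [hin, lintegral_indicator hE, interaction]

variable [OpensMeasurableSpace X] [SecondCountableTopology X]

lemma measurable_kernel_edist (hk : Measurable k) :
    Measurable fun z : X × X ↦ k (edist z.1 z.2) :=
  hk.comp measurable_edist

variable [SFinite (volume : Measure X)]

lemma interaction_comm (hk : Measurable k) (E F : Set X) :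
    interaction k E F = interaction k F E := by
  simp only [interaction]
  rw [lintegral_lintegral_swap (measurable_kernel_edist hk).aemeasurable]
  simp_rw [edist_comm]

lemma interaction_self_add_nonlocalPerimeter (hk : Measurable k) {E : Set X}
    (hE : MeasurableSet E) :
    interaction k E E + nonlocalPerimeter k E = interaction k E univ := by
  simp only [nonlocalPerimeter, interaction, Measure.restrict_univ]
  rw [← lintegral_add_left (by exact (measurable_kernel_edist hk).lintegral_prod_right')]
  simp_rw [lintegral_add_compl _ hE]

lemma interaction_self_le_add (hk : Measurable k) (F G : Set X) :
    interaction k F F ≤ interaction k G G + 2 * interaction k (F \ G) univ := by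
  have hFG : F ⊆ G ∪ F \ G := by simp
  calc interaction k F F
      ≤ interaction k G F + interaction k (F \ G) F :=
        (interaction_mono hFG le_rfl).trans (interaction_union_left_le _ _ _)
    _ ≤ interaction k G G + interaction k (F \ G) G + interaction k (F \ G) F := by
        gcongr
        rw [interaction_comm hk G F]
        exact (interaction_mono hFG le_rfl).trans (interaction_union_left_le _ _ _)
    _ ≤ interaction k G G + interaction k (F \ G) univ + interaction k (F \ G) univ := by
        gcongr <;> exact interaction_mono le_rfl (subset_univ _)
    _ = interaction k G G + 2 * interaction k (F \ G) univ := by ring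

end Interaction

section Truncation

/-- The truncation of a kernel at height and range `n`. Unlike `k`, it is integrable on bounded
sets and vanishes at large distances. -/
noncomputable def truncatedKernel (k : ℝ≥0∞ → ℝ≥0∞) (n : ℕ) : ℝ≥0∞ → ℝ≥0∞ :=
  (Iio (n : ℝ≥0∞)).indicator fun t ↦ min (k t) n

variable {k : ℝ≥0∞ → ℝ≥0∞}

lemma antitone_truncatedKernel (hk : Antitone k) (n : ℕ) : Antitone (truncatedKernel k n) := by
  intro s t hst
  by_cases ht : t < n
  · simpa [truncatedKernel, ht, hst.trans_lt ht] using Or.inl (hk hst)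
  · simp [truncatedKernel, ht]

lemma monotone_truncatedKernel (k : ℝ≥0∞ → ℝ≥0∞) : Monotone (truncatedKernel k) := by
  intro m n hmn t
  have hmn' : (m : ℝ≥0∞) ≤ n := by exact_mod_cast hmn
  by_cases ht : t < m
  · simpa [truncatedKernel, ht, ht.trans_le hmn'] using Or.inr hmn'
  · simp [truncatedKernel, ht]

lemma iSup_truncatedKernel {t : ℝ≥0∞} (ht : t ≠ ⊤) : ⨆ n, truncatedKernel k n t = k t := by
  refine le_antisymm (iSup_le fun n ↦ indicator_apply_le' (fun _ ↦ min_le_left _ _)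
    fun _ ↦ zero_le) (le_of_forall_lt fun a ha ↦ ?_)
  obtain ⟨n, hn⟩ := ENNReal.exists_nat_gt (max_ne_top ha.ne_top ht)
  rw [max_lt_iff] at hn
  refine (lt_min ha hn.1).trans_le (le_iSup_of_le n ?_)
  simp [truncatedKernel, hn.2]

variable {X : Type*} [PseudoMetricSpace X] [MeasureSpace X] [OpensMeasurableSpace X]
  [SecondCountableTopology X] [SFinite (volume : Measure X)]

lemma interaction_eq_iSup_truncatedKernel (hk : Antitone k) (E F : Set X) :
    interaction k E F = ⨆ n, interaction (truncatedKernel k n) E F := by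
  have hmeas (n : ℕ) : Measurable fun z : X × X ↦ truncatedKernel k n (edist z.1 z.2) :=
    measurable_kernel_edist (antitone_truncatedKernel hk n).measurable
  have hmono (x : X) : Monotone fun n y ↦ truncatedKernel k n (edist x y) :=
    fun _ _ h y ↦ monotone_truncatedKernel k h _
  have hin (x : X) :
      ∫⁻ y in F, k (edist x y) = ⨆ n, ∫⁻ y in F, truncatedKernel k n (edist x y) := by
    rw [← lintegral_iSup (f := fun n y ↦ truncatedKernel k n (edist x y))
      (fun n ↦ (hmeas n).comp measurable_prodMk_left) (hmono x)]
    simp_rw [iSup_truncatedKernel (edist_ne_top _ _)]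
  simp only [interaction, hin]
  exact lintegral_iSup (fun n ↦ (hmeas n).lintegral_prod_right')
    fun _ _ h x ↦ lintegral_mono (hmono x h)

end Truncation

section Homogeneous

variable {V : Type*} [NormedAddCommGroup V] [MeasureSpace V] [BorelSpace V]
  [(volume : Measure V).IsAddHaarMeasure]

lemma interaction_univ (k : ℝ≥0∞ → ℝ≥0∞) (E : Set V) :
    interaction k E univ = (∫⁻ y : V, k ‖y‖ₑ) * volume E := by
  have h (x : V) : ∫⁻ y, k (edist x y) = ∫⁻ y : V, k ‖y‖ₑ := by
    simpa [edist_comm x, edist_eq_enorm_sub] using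
      lintegral_sub_right_eq_self (fun y : V ↦ k ‖y‖ₑ) x
  simp [interaction, h]

lemma lintegral_truncatedKernel_enorm_ne_top [ProperSpace V] (k : ℝ≥0∞ → ℝ≥0∞) (n : ℕ) :
    ∫⁻ y : V, truncatedKernel k n ‖y‖ₑ ≠ ⊤ := by
  refine ne_top_of_le_ne_top (b := n * volume (ball (0 : V) n))
    (ENNReal.mul_ne_top (by simp) measure_ball_lt_top.ne) ?_
  rw [← lintegral_indicator_const measurableSet_ball]
  refine lintegral_mono fun y ↦ ?_
  by_cases hy : ‖y‖ₑ < n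
  · have : ‖y‖ < n := by simpa using ENNReal.toReal_strict_mono (natCast_ne_top n) hy
    simp [truncatedKernel, hy, this]
  · simp [truncatedKernel, hy]

variable [NormedSpace ℝ V] [FiniteDimensional ℝ V]

lemma setLIntegral_smul_set {r : ℝ} (hr : 0 < r) (E : Set V) (f : V → ℝ≥0∞) :
    ∫⁻ x in r • E, f x = ENNReal.ofReal r ^ Module.finrank ℝ V * ∫⁻ x in E, f (r • x) := by
  have he : MeasurableEmbedding fun x : V ↦ r • x := measurableEmbedding_const_smul₀ hr.ne'
  have hmap : ENNReal.ofReal r ^ Module.finrank ℝ V • Measure.map (r • ·) (volume : Measure V) =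
      volume := by
    rw [Measure.map_addHaar_smul _ hr.ne', smul_smul, abs_of_pos (by positivity),
      ← ofReal_pow hr.le, ← ofReal_mul (by positivity), mul_inv_cancel₀ (by positivity),
      ofReal_one, one_smul]
  calc ∫⁻ x in r • E, f x
      = ENNReal.ofReal r ^ Module.finrank ℝ V *
          ∫⁻ x in r • E, f x ∂(Measure.map (r • ·) (volume : Measure V)) := by
        rw [← smul_eq_mul, ← lintegral_smul_measure, ← Measure.restrict_smul, hmap]
    _ = ENNReal.ofReal r ^ Module.finrank ℝ V * ∫⁻ x in E, f (r • x) := by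
        rw [he.restrict_map, he.lintegral_map, ← image_smul, he.injective.preimage_image]

lemma nonlocalPerimeter_rpow_smul {r : ℝ} (hr : 0 < r) (a : ℝ) (E : Set V) :
    nonlocalPerimeter (· ^ a) (r • E) =
      ENNReal.ofReal r ^ (2 * Module.finrank ℝ V + a) * nonlocalPerimeter (· ^ a) E := by
  have hr0 : ENNReal.ofReal r ≠ 0 := by simpa
  have hra : ENNReal.ofReal r ^ a ≠ ⊤ := rpow_ne_top_of_ne_zero hr0 ofReal_ne_top
  have hcompl : (r • E)ᶜ = r • Eᶜ := (image_compl_eq (MulAction.bijective₀ hr.ne')).symm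
  have hdist (x y : V) : edist (r • x) (r • y) ^ a = ENNReal.ofReal r ^ a * edist x y ^ a := by
    rw [edist_smul₀, ENNReal.smul_def, smul_eq_mul, ← enorm_eq_nnnorm,
      Real.enorm_of_nonneg hr.le, mul_rpow_of_ne_top ofReal_ne_top (edist_ne_top x y)]
  simp only [nonlocalPerimeter, interaction, hcompl]
  simp_rw [setLIntegral_smul_set hr, hdist, lintegral_const_mul' _ _ hra,
    lintegral_const_mul' _ _ (pow_ne_top ofReal_ne_top),
    lintegral_const_mul' _ _ hra]
  rw [rpow_add _ _ hr0 ofReal_ne_top, two_mul, rpow_add _ _ hr0 ofReal_ne_top, rpow_natCast]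
  ring

end Homogeneous

section Polarization

lemma mul_mul_add_le_max_min {S : Type*} [CommSemiring S] [LinearOrder S] [CanonicallyOrderedAdd S]
    {a b : S} (hab : b ≤ a) (f f' g g' : S) :
    f * g * a + f * g' * b + (f' * g * b + f' * g' * a) ≤
      max f f' * max g g' * a + max f f' * min g g' * b +
        (min f f' * max g g' * b + min f f' * min g g' * a) := by
  obtain ⟨c, rfl⟩ := exists_add_of_le hab
  rcases le_total f f' with hf | hf <;> rcases le_total g g' with hg | hg <;>
    simp only [hf, hg, max_eq_left, max_eq_right, min_eq_left, min_eq_right] <;>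
    obtain ⟨d, rfl⟩ := exists_add_of_le hf <;> obtain ⟨e, rfl⟩ := exists_add_of_le hg
  · exact le_of_eq (by ring)
  · exact le_iff_exists_add.2 ⟨d * e * c, by ring⟩
  · exact le_iff_exists_add.2 ⟨d * e * c, by ring⟩
  · exact le_of_eq (by ring)

variable {V : Type*} [NormedAddCommGroup V] [InnerProductSpace ℝ V]

/-- The polarization (two-point symmetrization) of `F` with respect to the perpendicular bisector
of the segment from `0` to `p`: whenever exactly one of two reflected points lies in `F`, it is
replaced by the one on the side of `0`. -/
def polarization (p : V) (F : Set V) : Set V :=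
  F ∩ bisectorReflection p ⁻¹' F ∪
    {x | 0 ≤ bisectorHeight p x} ∩ (F ∪ bisectorReflection p ⁻¹' F)

lemma mem_polarization_iff_or {p x : V} {F : Set V} (h : 0 ≤ bisectorHeight p x) :
    x ∈ polarization p F ↔ x ∈ F ∨ bisectorReflection p x ∈ F := by
  simp only [polarization, mem_union, mem_inter_iff, mem_preimage, mem_ofPred_eq, h]
  tauto

lemma bisectorReflection_mem_polarization_iff_and {p x : V} {F : Set V}
    (h : 0 ≤ bisectorHeight p x) :
    bisectorReflection p x ∈ polarization p F ↔ x ∈ F ∧ bisectorReflection p x ∈ F := by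
  rcases h.eq_or_lt with h0 | h0
  · simp [polarization, bisectorReflection_eq_add_smul, ← h0]
  · simp [polarization, h0.not_ge, and_comm]

lemma indicator_polarization_eq_max {p x : V} (F : Set V) (h : 0 ≤ bisectorHeight p x) :
    (polarization p F).indicator (1 : V → ℝ≥0∞) x =
      max (F.indicator 1 x) (F.indicator 1 (bisectorReflection p x)) := by
  by_cases h1 : x ∈ F <;> by_cases h2 : bisectorReflection p x ∈ F <;>
    simp [mem_polarization_iff_or h, h1, h2]

lemma indicator_polarization_bisectorReflection_eq_min {p x : V} (F : Set V)
    (h : 0 ≤ bisectorHeight p x) :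
    (polarization p F).indicator (1 : V → ℝ≥0∞) (bisectorReflection p x) =
      min (F.indicator 1 x) (F.indicator 1 (bisectorReflection p x)) := by
  by_cases h1 : x ∈ F <;> by_cases h2 : bisectorReflection p x ∈ F <;>
    simp [bisectorReflection_mem_polarization_iff_and h, h1, h2]

lemma polarization_subset_closedBall {p : V} {F : Set V} {R : ℝ} (hF : F ⊆ closedBall 0 R) :
    polarization p F ⊆ closedBall 0 R := by
  rintro x (⟨hx, -⟩ | ⟨h, hx | hx⟩)
  · exact hF hx
  · exact hF hx
  · exact mem_closedBall_zero_iff.2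
      ((norm_le_norm_bisectorReflection h).trans (mem_closedBall_zero_iff.1 (hF hx)))

lemma polarization_sdiff_ball_sdiff_subset_preimage (p : V) (F : Set V) (ρ : ℝ) :
    (polarization p F \ ball 0 ρ) \ F ⊆
      bisectorReflection p ⁻¹' ((F \ ball 0 ρ) \ polarization p F) := by
  rintro x ⟨⟨⟨hx, -⟩ | ⟨h, hx⟩, hxB⟩, hxF⟩
  · exact absurd hx hxF
  · rw [mem_ball_zero_iff, not_lt] at hxB
    refine ⟨⟨hx.resolve_left hxF, ?_⟩, ?_⟩
    · rw [mem_ball_zero_iff, not_lt]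
      exact hxB.trans (norm_le_norm_bisectorReflection h)
    · exact fun hRx ↦ hxF ((bisectorReflection_mem_polarization_iff_and h).1 hRx).1

lemma sdiff_inter_preimage_sdiff_ball_subset_preimage (p : V) (F : Set V) (ρ : ℝ) :
    {x ∈ ball 0 ρ \ F | bisectorReflection p x ∈ F \ ball 0 ρ} ⊆
      bisectorReflection p ⁻¹' ((F \ ball 0 ρ) \ polarization p F) := by
  rintro x ⟨⟨hxB, hxF⟩, hRx, hRxB⟩
  refine ⟨⟨hRx, hRxB⟩, fun hP ↦ hxF ((bisectorReflection_mem_polarization_iff_and ?_).1 hP).1⟩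
  rw [mem_ball_zero_iff] at hxB hRxB
  exact bisectorHeight_nonneg_of_norm_lt (by linarith)

variable [FiniteDimensional ℝ V] [MeasurableSpace V] [BorelSpace V]

lemma measurable_bisectorHeight : Measurable fun z : V × V ↦ bisectorHeight z.1 z.2 := by
  unfold bisectorHeight
  fun_prop

lemma measurable_bisectorReflection : Measurable fun z : V × V ↦ bisectorReflection z.1 z.2 := by
  have := measurable_bisectorHeight (V := V)
  simp only [bisectorReflection_eq_add_smul]
  fun_prop

lemma measurePreserving_bisectorReflection (p : V) :
    MeasurePreserving (bisectorReflection p) volume volume :=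
  (measurePreserving_add_right volume p).comp (ℝ ∙ p)ᗮ.reflection.measurePreserving

lemma measurableSet_polarization {p : V} {F : Set V} (hF : MeasurableSet F) :
    MeasurableSet (polarization p F) := by
  have hR : MeasurableSet (bisectorReflection p ⁻¹' F) :=
    (measurePreserving_bisectorReflection p).measurable hF
  have hH : MeasurableSet {x : V | 0 ≤ bisectorHeight p x} :=
    measurableSet_le measurable_const (measurable_bisectorHeight.comp measurable_prodMk_left)
  exact (hF.inter hR).union (hH.inter (hF.union hR))

lemma lintegral_le_of_add_bisectorReflection_le {p : V} {f g : V → ℝ≥0∞} (hf : Measurable f)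
    (hg : Measurable g) (h : ∀ x, 0 ≤ bisectorHeight p x →
      f x + f (bisectorReflection p x) ≤ g x + g (bisectorReflection p x)) :
    ∫⁻ x, f x ≤ ∫⁻ x, g x := by
  have hpair (u : V → ℝ≥0∞) (hu : Measurable u) :
      ∫⁻ x, (u x + u (bisectorReflection p x)) = 2 * ∫⁻ x, u x := by
    rw [lintegral_add_left hu, (measurePreserving_bisectorReflection p).lintegral_comp hu, two_mul]
  have hle (x : V) : f x + f (bisectorReflection p x) ≤ g x + g (bisectorReflection p x) := by
    rcases le_total 0 (bisectorHeight p x) with hx | hx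
    · exact h x hx
    · simpa [add_comm] using h (bisectorReflection p x) (by simpa using hx)
  rw [← ENNReal.mul_le_mul_iff_right two_ne_zero ofNat_ne_top, ← hpair f hf, ← hpair g hg]
  exact lintegral_mono hle

lemma lintegral_lintegral_le_of_add_bisectorReflection_le {p : V} {f g : V → V → ℝ≥0∞}
    (hf : Measurable (Function.uncurry f)) (hg : Measurable (Function.uncurry g))
    (h : ∀ x y, 0 ≤ bisectorHeight p x → 0 ≤ bisectorHeight p y →
      f x y + f x (bisectorReflection p y) +
          (f (bisectorReflection p x) y + f (bisectorReflection p x) (bisectorReflection p y)) ≤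
        g x y + g x (bisectorReflection p y) +
          (g (bisectorReflection p x) y + g (bisectorReflection p x) (bisectorReflection p y))) :
    ∫⁻ x, ∫⁻ y, f x y ≤ ∫⁻ x, ∫⁻ y, g x y := by
  refine lintegral_le_of_add_bisectorReflection_le (p := p) hf.lintegral_prod_right'
    hg.lintegral_prod_right' fun x hx ↦ ?_
  have hf' (x : V) : Measurable (f x) := hf.comp measurable_prodMk_left
  have hg' (x : V) : Measurable (g x) := hg.comp measurable_prodMk_left
  change (∫⁻ y, f x y) + ∫⁻ y, f (bisectorReflection p x) y ≤
    (∫⁻ y, g x y) + ∫⁻ y, g (bisectorReflection p x) y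
  rw [← lintegral_add_left (hf' x), ← lintegral_add_left (hg' x)]
  refine lintegral_le_of_add_bisectorReflection_le (p := p) ((hf' _).add (hf' _))
    ((hg' _).add (hg' _)) fun y hy ↦ ?_
  simpa only [add_add_add_comm] using h x y hx hy

lemma volume_polarization {p : V} {F : Set V} (hF : MeasurableSet F) :
    volume (polarization p F) = volume F := by
  have hP := measurableSet_polarization (p := p) hF
  have hpair (x : V) (h : 0 ≤ bisectorHeight p x) :
      (polarization p F).indicator (1 : V → ℝ≥0∞) x +
          (polarization p F).indicator 1 (bisectorReflection p x) =
        F.indicator 1 x + F.indicator 1 (bisectorReflection p x) := by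
    rw [indicator_polarization_eq_max F h, indicator_polarization_bisectorReflection_eq_min F h,
      max_add_min]
  rw [← lintegral_indicator_one hF, ← lintegral_indicator_one hP]
  exact le_antisymm
    (lintegral_le_of_add_bisectorReflection_le (measurable_one.indicator hP)
      (measurable_one.indicator hF) fun x h ↦ (hpair x h).le)
    (lintegral_le_of_add_bisectorReflection_le (measurable_one.indicator hF)
      (measurable_one.indicator hP) fun x h ↦ (hpair x h).ge)

lemma interaction_le_polarization {k : ℝ≥0∞ → ℝ≥0∞} (hk : Antitone k) (p : V) {F : Set V}
    (hF : MeasurableSet F) :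
    interaction k F F ≤ interaction k (polarization p F) (polarization p F) := by
  have hP := measurableSet_polarization (p := p) hF
  have hmeas {S : Set V} (hS : MeasurableSet S) : Measurable (Function.uncurry fun x y : V ↦
      S.indicator 1 x * S.indicator 1 y * k (edist x y)) :=
    (((measurable_one.indicator hS).comp measurable_fst).mul
      ((measurable_one.indicator hS).comp measurable_snd)).mul
        (measurable_kernel_edist hk.measurable)
  rw [← lintegral_indicator_mul_indicator_mul_edist hF hF,
    ← lintegral_indicator_mul_indicator_mul_edist hP hP]
  refine lintegral_lintegral_le_of_add_bisectorReflection_le (p := p) (hmeas hF) (hmeas hP)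
    fun x y hx hy ↦ ?_
  have hdist : edist x y ≤ edist x (bisectorReflection p y) := by
    simpa only [edist_dist, dist_eq_norm] using
      ofReal_le_ofReal (norm_sub_le_norm_sub_bisectorReflection hx hy)
  have hswap : edist (bisectorReflection p x) y = edist x (bisectorReflection p y) := by
    simpa using edist_bisectorReflection_bisectorReflection p x (bisectorReflection p y)
  simp only [indicator_polarization_eq_max F hx, indicator_polarization_eq_max F hy,
    indicator_polarization_bisectorReflection_eq_min F hx,
    indicator_polarization_bisectorReflection_eq_min F hy, hswap,
    edist_bisectorReflection_bisectorReflection]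
  exact mul_mul_add_le_max_min (hk hdist) _ _ _ _

lemma volume_polarization_sdiff_ball_add_le (p : V) {F : Set V} (hF : MeasurableSet F) (ρ : ℝ) :
    volume (polarization p F \ ball 0 ρ) +
        volume {x ∈ ball 0 ρ \ F | bisectorReflection p x ∈ F \ ball 0 ρ} ≤
      volume (F \ ball 0 ρ) := by
  set P := polarization p F
  set B : Set V := ball 0 ρ
  set G : Set V := {x ∈ B \ F | bisectorReflection p x ∈ F \ B}
  have hP : MeasurableSet P := measurableSet_polarization hF
  have hB : MeasurableSet B := measurableSet_ball
  have hR := measurePreserving_bisectorReflection p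
  have hG : MeasurableSet G := (hB.diff hF).inter (hR.measurable (hF.diff hB))
  have hdisj : Disjoint ((P \ B) \ F) G := disjoint_left.2 fun x hx hx' ↦ hx.1.2 hx'.1.1
  calc volume (P \ B) + volume G
      = volume ((F \ B) ∩ P) + volume ((P \ B) \ F ∪ G) := by
        rw [measure_union hdisj hG, ← add_assoc, ← measure_inter_add_sdiff (P \ B) hF]
        congr 3
        ext x
        simp only [mem_inter_iff, mem_sdiff]
        tauto
    _ ≤ volume ((F \ B) ∩ P) + volume (bisectorReflection p ⁻¹' ((F \ B) \ P)) := by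
        gcongr
        exact union_subset (polarization_sdiff_ball_sdiff_subset_preimage p F ρ)
          (sdiff_inter_preimage_sdiff_ball_subset_preimage p F ρ)
    _ = volume (F \ B) := by
        rw [hR.measure_preimage ((hF.diff hB).diff hP).nullMeasurableSet,
          measure_inter_add_sdiff _ hP]

end Polarization

section Matching

lemma exists_mul_div_le_measure_section {α β : Type*} [MeasurableSpace α] [MeasurableSpace β]
    {μ : Measure α} {ν : Measure β} [IsFiniteMeasure μ] [IsFiniteMeasure ν] {S : Set (α × β)}
    (hS : MeasurableSet S) {κ : ℝ≥0∞} (hκ : κ * μ univ ≠ 0)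
    (h : ∀ᵐ x ∂μ, κ ≤ ν (Prod.mk x ⁻¹' S)) :
    ∃ y, κ * μ univ / ν univ ≤ μ ((fun x ↦ (x, y)) ⁻¹' S) := by
  have hprod : ∫⁻ y, μ ((fun x ↦ (x, y)) ⁻¹' S) ∂ν = μ.prod ν S :=
    (Measure.prod_apply_symm hS).symm
  have hle : κ * μ univ ≤ μ.prod ν S := by
    rw [Measure.prod_apply hS, ← lintegral_const]
    exact lintegral_mono_ae h
  have hν : ν ≠ 0 := by
    rintro rfl
    simp [hκ] at hle
  obtain ⟨y, hy⟩ := exists_laverage_le hν (hprod ▸ measure_ne_top _ _)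
  refine ⟨y, le_trans ?_ hy⟩
  rw [laverage_eq, hprod]
  gcongr

lemma addHaar_image_le_of_lipschitzOnWith {W : Type*} [NormedAddCommGroup W] [NormedSpace ℝ W]
    [FiniteDimensional ℝ W] [MeasurableSpace W] [BorelSpace W] (μ : Measure W) [μ.IsAddHaarMeasure]
    {K : ℝ≥0} {f : W → W} {s : Set W} (hf : LipschitzOnWith K f s) :
    μ (f '' s) ≤ (K : ℝ≥0∞) ^ Module.finrank ℝ W * μ s := by
  have h := hf.hausdorffMeasure_image_le (d := Module.finrank ℝ W) (by positivity)
  rw [rpow_natCast] at h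
  rw [Measure.isAddLeftInvariant_eq_smul μ (μH[Module.finrank ℝ W] : Measure W)]
  simp only [Measure.smul_apply, ENNReal.smul_def, smul_eq_mul, mul_left_comm _ (ofNNReal _)]
  gcongr

variable {V : Type*} [NormedAddCommGroup V] [InnerProductSpace ℝ V] [FiniteDimensional ℝ V]
  [MeasurableSpace V] [BorelSpace V]

lemma exists_volume_ball_add_sdiff_ball_le [Nontrivial V] (ρ : ℝ≥0) {ε : ℝ≥0∞} (hε : ε ≠ 0) :
    ∃ η : ℝ≥0, 0 < η ∧ volume (ball (0 : V) (ρ + η) \ ball 0 ρ) ≤ ε := by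
  have hball (r : ℝ≥0) : volume (ball (0 : V) r) =
      (r : ℝ≥0∞) ^ Module.finrank ℝ V * volume (ball (0 : V) 1) := by
    rw [Measure.addHaar_ball volume (0 : V) r.coe_nonneg, ofReal_pow r.coe_nonneg,
      ofReal_coe_nnreal]
  have hcont : Continuous fun η : ℝ≥0 ↦ volume (ball (0 : V) (ρ + η)) := by
    simp_rw [← NNReal.coe_add, hball]
    exact (ENNReal.continuous_mul_const measure_ball_lt_top.ne).comp
      ((ENNReal.continuous_pow _).comp (continuous_coe.comp (by fun_prop)))
  have hlt : volume (ball (0 : V) (ρ + (0 : ℝ≥0))) < volume (ball (0 : V) ρ) + ε := by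
    simpa using ENNReal.lt_add_right measure_ball_lt_top.ne hε
  obtain ⟨η, hηε, hη⟩ := ((hcont.continuousWithinAt.eventually_lt_const hlt).and
    (self_mem_nhdsWithin (s := Ioi 0))).exists
  refine ⟨η, hη, ?_⟩
  rw [measure_sdiff (ball_subset_ball (by simp)) measurableSet_ball.nullMeasurableSet
    measure_ball_lt_top.ne]
  exact tsub_le_iff_left.2 hηε.le

lemma volume_le_mul_volume_bisectorReflection_mem {ρ η : ℝ≥0} (hη : 0 < η) {R : ℝ} {x : V}
    (hx : ‖x‖ ≤ ρ) {S : Set V} (hS : S ⊆ closedBall 0 R \ ball 0 (ρ + η)) :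
    volume S ≤ ((1 + 4 * ρ / η : ℝ≥0) : ℝ≥0∞) ^ Module.finrank ℝ V *
      volume {p ∈ closedBall 0 (ρ + R) | bisectorReflection p x ∈ S} := by
  have hnorm {y : V} (hy : y ∈ S) : ρ + η ≤ ‖y‖ := by simpa using (hS hy).2
  have hη' : (0 : ℝ) < η := hη
  have hsub : S ⊆ (fun p ↦ bisectorReflection p x) ''
      {p ∈ closedBall 0 (ρ + R) | bisectorReflection p x ∈ S} := by
    intro y hy
    obtain ⟨p, rfl⟩ := exists_bisectorReflection_eq (x := x) (y := y) (by linarith [hnorm hy, hη'])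
    refine ⟨p, ⟨mem_closedBall_zero_iff.2 ?_, hy⟩, rfl⟩
    exact (norm_le_norm_add_norm_bisectorReflection p x).trans
      (add_le_add hx (mem_closedBall_zero_iff.1 (hS hy).1))
  have hlip := (lipschitzOnWith_bisectorReflection hη hx).mono
    (s := {p ∈ closedBall 0 (ρ + R) | bisectorReflection p x ∈ S}) fun p hp ↦ by
      rw [mem_ofPred_eq]
      linarith [hnorm hp.2, norm_bisectorReflection_le p x]
  exact (measure_mono hsub).trans (addHaar_image_le_of_lipschitzOnWith volume hlip)

lemma exists_mul_div_le_volume_bisectorReflection_mem {ρ η : ℝ≥0} (hη : 0 < η) {R : ℝ}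
    {A S : Set V} (hA : MeasurableSet A) (hS : MeasurableSet S) (hAρ : A ⊆ closedBall 0 ρ)
    (hSR : S ⊆ closedBall 0 R \ ball 0 (ρ + η)) (hA0 : volume A ≠ 0) (hS0 : volume S ≠ 0) :
    ∃ p, volume S / ((1 + 4 * ρ / η : ℝ≥0) : ℝ≥0∞) ^ Module.finrank ℝ V * volume A /
        volume (closedBall (0 : V) (ρ + R)) ≤
      volume {x ∈ A | bisectorReflection p x ∈ S} := by
  set L : ℝ≥0∞ := ((1 + 4 * ρ / η : ℝ≥0) : ℝ≥0∞) ^ Module.finrank ℝ V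
  have hL : L ≠ 0 := pow_ne_zero _ (coe_ne_zero.2 (by positivity))
  have hL' : L ≠ ⊤ := pow_ne_top coe_ne_top
  set D : Set V := closedBall 0 (ρ + R)
  have : IsFiniteMeasure (volume.restrict A) :=
    isFiniteMeasure_restrict.2 (measure_ne_top_of_subset hAρ measure_closedBall_lt_top.ne)
  have : IsFiniteMeasure (volume.restrict D) :=
    isFiniteMeasure_restrict.2 measure_closedBall_lt_top.ne
  let T : Set (V × V) := {z | bisectorReflection z.2 z.1 ∈ S}
  have hT : MeasurableSet T := (measurable_bisectorReflection.comp measurable_swap) hS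
  have hsection : ∀ᵐ x ∂volume.restrict A,
      volume S / L ≤ volume.restrict D (Prod.mk x ⁻¹' T) := by
    refine ae_restrict_of_forall_mem hA fun x hx ↦ ?_
    rw [ENNReal.div_le_iff' hL hL', Measure.restrict_apply (measurable_prodMk_left hT), inter_comm]
    exact volume_le_mul_volume_bisectorReflection_mem hη (mem_closedBall_zero_iff.1 (hAρ hx)) hSR
  obtain ⟨p, hp⟩ := exists_mul_div_le_measure_section hT
    (mul_ne_zero (ENNReal.div_ne_zero.2 ⟨hS0, hL'⟩) (by simpa using hA0)) hsection
  rw [Measure.restrict_apply_univ, Measure.restrict_apply_univ,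
    Measure.restrict_apply (measurable_prodMk_right hT), inter_comm] at hp
  exact ⟨p, hp⟩

lemma exists_le_volume_bisectorReflection_mem [Nontrivial V] (ρ : ℝ≥0) (R : ℝ) {ε : ℝ≥0∞}
    (hε : ε ≠ 0) :
    ∃ c ≠ 0, ∀ A C : Set V, MeasurableSet A → MeasurableSet C → A ⊆ ball 0 ρ →
      C ⊆ closedBall 0 R \ ball 0 ρ → ε ≤ volume A → ε ≤ volume C →
        ∃ p, c ≤ volume {x ∈ A | bisectorReflection p x ∈ C} := by
  have hε2 : ε / 2 ≠ 0 := (ENNReal.half_pos hε).ne'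
  obtain ⟨η, hη, hηε⟩ := exists_volume_ball_add_sdiff_ball_le (V := V) ρ hε2
  refine ⟨ε / 2 / ((1 + 4 * ρ / η : ℝ≥0) : ℝ≥0∞) ^ Module.finrank ℝ V * ε /
    volume (closedBall (0 : V) (ρ + R)), ?_, fun A C hA hC hAρ hCR hεA hεC ↦ ?_⟩
  · refine ENNReal.div_ne_zero.2 ⟨mul_ne_zero ?_ hε, measure_closedBall_lt_top.ne⟩
    exact ENNReal.div_ne_zero.2 ⟨hε2, pow_ne_top coe_ne_top⟩
  set C' := C \ ball 0 (ρ + η)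
  have hεC' : ε / 2 ≤ volume C' := by
    have hC_le : volume C ≤ volume C' + ε / 2 := by
      refine (measure_mono ?_).trans ((measure_union_le C' _).trans (by gcongr))
      exact fun x hx ↦ (em (x ∈ ball 0 (ρ + η : ℝ))).symm.imp (⟨hx, ·⟩) (⟨·, (hCR hx).2⟩)
    have hε' : ε / 2 ≠ ⊤ := (ENNReal.half_le_self.trans_lt <| hεC.trans_lt <|
      measure_lt_top_of_subset (hCR.trans sdiff_subset) measure_closedBall_lt_top.ne).ne
    rw [← ENNReal.add_le_add_iff_right hε', ENNReal.add_halves]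
    exact hεC.trans hC_le
  obtain ⟨p, hp⟩ := exists_mul_div_le_volume_bisectorReflection_mem hη hA
    (hC.diff measurableSet_ball) (hAρ.trans ball_subset_closedBall)
    (sdiff_subset_sdiff_left (hCR.trans sdiff_subset))
    (ne_bot_of_le_ne_bot hε hεA) (ne_bot_of_le_ne_bot hε2 hεC')
  refine ⟨p, le_trans (by gcongr) (hp.trans (measure_mono ?_))⟩
  exact fun x hx ↦ ⟨hx.1, hx.2.1⟩

end Matching

section RieszRearrangement

lemma measure_sdiff_le_measure_sdiff {α : Type*} [MeasurableSpace α] {μ : Measure α} {s t : Set α}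
    (hs : MeasurableSet s) (ht : MeasurableSet t) (hst : μ s ≤ μ t) (hfin : μ s ≠ ⊤) :
    μ (s \ t) ≤ μ (t \ s) := by
  rw [← measure_inter_add_sdiff s ht, ← measure_inter_add_sdiff t hs, inter_comm t s] at hst
  exact (ENNReal.add_le_add_iff_left (measure_ne_top_of_subset inter_subset_left hfin)).1 hst

lemma le_of_forall_ne_zero_le_add_mul {a b K : ℝ≥0∞} (hK : K ≠ ⊤)
    (h : ∀ δ ≠ 0, a ≤ b + K * δ) : a ≤ b := by
  have hcont : Continuous fun δ ↦ b + K * δ := (ENNReal.continuous_const_mul hK).const_add b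
  have hle : a ≤ b + K * 0 := ge_of_tendsto (hcont.continuousWithinAt (s := {0}ᶜ) (x := 0))
    (Filter.eventually_of_mem self_mem_nhdsWithin h)
  simpa using hle

variable {V : Type*} [NormedAddCommGroup V] [InnerProductSpace ℝ V]

/-- `IsIteratedPolarization E F` means that `F` is obtained from `E` by finitely many successive
polarizations. -/
def IsIteratedPolarization : Set V → Set V → Prop :=
  Relation.ReflTransGen fun E F ↦ ∃ p, F = polarization p E

namespace IsIteratedPolarization

variable {E F : Set V}

lemma subset_closedBall (h : IsIteratedPolarization E F) {R : ℝ} (hE : E ⊆ closedBall 0 R) :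
    F ⊆ closedBall 0 R := by
  induction h with
  | refl => exact hE
  | tail _ hp ih =>
    obtain ⟨p, rfl⟩ := hp
    exact polarization_subset_closedBall ih

variable [FiniteDimensional ℝ V] [MeasurableSpace V] [BorelSpace V]

lemma measurableSet (h : IsIteratedPolarization E F) (hE : MeasurableSet E) : MeasurableSet F := by
  induction h with
  | refl => exact hE
  | tail _ hp ih =>
    obtain ⟨p, rfl⟩ := hp
    exact measurableSet_polarization ih

lemma volume_eq (h : IsIteratedPolarization E F) (hE : MeasurableSet E) : volume F = volume E := by
  induction h with
  | refl => rfl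
  | tail hF hp ih =>
    obtain ⟨p, rfl⟩ := hp
    exact (volume_polarization (measurableSet hF hE)).trans ih

lemma interaction_le (h : IsIteratedPolarization E F) (hE : MeasurableSet E)
    {k : ℝ≥0∞ → ℝ≥0∞} (hk : Antitone k) : interaction k E E ≤ interaction k F F := by
  induction h with
  | refl => rfl
  | tail hF hp ih =>
    obtain ⟨p, rfl⟩ := hp
    exact ih.trans (interaction_le_polarization hk p (measurableSet hF hE))

end IsIteratedPolarization

variable [FiniteDimensional ℝ V] [MeasurableSpace V] [BorelSpace V]

lemma exists_isIteratedPolarization_volume_sdiff_ball_lt [Nontrivial V] {ρ : ℝ≥0} {E : Set V}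
    (hE : MeasurableSet E) (hEbdd : Bornology.IsBounded E)
    (hvol : volume E ≤ volume (ball (0 : V) ρ)) {δ : ℝ≥0∞} (hδ : δ ≠ 0) :
    ∃ F, IsIteratedPolarization E F ∧ volume (F \ ball 0 ρ) < δ := by
  set B : Set V := ball 0 ρ
  obtain ⟨R, hER⟩ := hEbdd.subset_closedBall 0
  set m := ⨅ F : {F // IsIteratedPolarization E F}, volume (F.1 \ B)
  suffices hm : m = 0 by
    obtain ⟨F, hF⟩ := iInf_lt_iff.1 (hm ▸ pos_of_ne_zero hδ : m < δ)
    exact ⟨F.1, F.2, hF⟩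
  by_contra hm
  obtain ⟨c, hc, hgain⟩ := exists_le_volume_bisectorReflection_mem (V := V) ρ R hm
  have hstep (F : {F // IsIteratedPolarization E F}) : m + c ≤ volume (F.1 \ B) := by
    obtain ⟨F, hF⟩ := F
    have hFm := hF.measurableSet hE
    have hFvol : volume F ≤ volume B := (hF.volume_eq hE).trans_le hvol
    have hmF : m ≤ volume (F \ B) := iInf_le_of_le ⟨F, hF⟩ le_rfl
    obtain ⟨p, hp⟩ := hgain (B \ F) (F \ B) (measurableSet_ball.diff hFm)
      (hFm.diff measurableSet_ball) sdiff_subset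
      (sdiff_subset_sdiff_left (hF.subset_closedBall hER))
      (hmF.trans (measure_sdiff_le_measure_sdiff hFm measurableSet_ball hFvol
        (hFvol.trans_lt measure_ball_lt_top).ne)) hmF
    refine le_trans (add_le_add ?_ hp) (volume_polarization_sdiff_ball_add_le p hFm ρ)
    exact iInf_le_of_le ⟨_, hF.tail ⟨p, rfl⟩⟩ le_rfl
  have hm_top : m ≠ ⊤ := ne_top_of_le_ne_top
    (measure_ne_top_of_subset (sdiff_subset.trans hER) measure_closedBall_lt_top.ne)
    (iInf_le_of_le ⟨E, Relation.ReflTransGen.refl⟩ le_rfl)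
  exact (ENNReal.lt_add_right hm_top hc).not_ge (le_iInf hstep)

lemma interaction_self_le_add_lintegral_mul {k : ℝ≥0∞ → ℝ≥0∞} (hk : Measurable k) (F G : Set V) :
    interaction k F F ≤
      interaction k G G + 2 * (∫⁻ y : V, k ‖y‖ₑ) * volume (F \ G) := by
  simpa only [interaction_univ, mul_assoc] using interaction_self_le_add hk F G

lemma interaction_self_le_ball_of_isBounded [Nontrivial V] {k : ℝ≥0∞ → ℝ≥0∞} (hk : Antitone k)
    (hkint : ∫⁻ y : V, k ‖y‖ₑ ≠ ⊤) {ρ : ℝ≥0} {E : Set V} (hE : MeasurableSet E)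
    (hEbdd : Bornology.IsBounded E) (hvol : volume E ≤ volume (ball (0 : V) ρ)) :
    interaction k E E ≤ interaction k (ball (0 : V) ρ) (ball 0 ρ) := by
  refine le_of_forall_ne_zero_le_add_mul (K := 2 * ∫⁻ y : V, k ‖y‖ₑ)
    (ENNReal.mul_ne_top ofNat_ne_top hkint) fun δ hδ ↦ ?_
  obtain ⟨F, hF, hFδ⟩ := exists_isIteratedPolarization_volume_sdiff_ball_lt hE hEbdd hvol hδ
  refine (hF.interaction_le hE hk).trans ((interaction_self_le_add_lintegral_mul hk.measurable F
    (ball 0 ρ)).trans ?_)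
  gcongr

lemma interaction_self_le_ball [Nontrivial V] {k : ℝ≥0∞ → ℝ≥0∞} (hk : Antitone k)
    (hkint : ∫⁻ y : V, k ‖y‖ₑ ≠ ⊤) {ρ : ℝ≥0} {E : Set V} (hE : MeasurableSet E)
    (hvol : volume E ≤ volume (ball (0 : V) ρ)) :
    interaction k E E ≤ interaction k (ball (0 : V) ρ) (ball 0 ρ) := by
  refine le_of_forall_ne_zero_le_add_mul (K := 2 * ∫⁻ y : V, k ‖y‖ₑ)
    (ENNReal.mul_ne_top ofNat_ne_top hkint) fun δ hδ ↦ ?_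
  obtain ⟨C, hCE, hC, hCδ⟩ := hE.exists_isCompact_sdiff_lt
    (hvol.trans_lt measure_ball_lt_top).ne hδ
  refine (interaction_self_le_add_lintegral_mul hk.measurable E C).trans ?_
  gcongr
  exact interaction_self_le_ball_of_isBounded hk hkint hC.measurableSet hC.isBounded
    ((measure_mono hCE).trans hvol)

end RieszRearrangement

section IsoperimetricInequality

variable {V : Type*} [NormedAddCommGroup V] [InnerProductSpace ℝ V] [FiniteDimensional ℝ V]
  [MeasurableSpace V] [BorelSpace V]

lemma nonlocalPerimeter_ball_le_of_lintegral_ne_top [Nontrivial V] {k : ℝ≥0∞ → ℝ≥0∞}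
    (hk : Antitone k) (hkint : ∫⁻ y : V, k ‖y‖ₑ ≠ ⊤) {ρ : ℝ≥0} {E : Set V} (hE : MeasurableSet E)
    (hvol : volume E = volume (ball (0 : V) ρ)) :
    nonlocalPerimeter k (ball (0 : V) ρ) ≤ nonlocalPerimeter k E := by
  have hsum (S : Set V) (hS : MeasurableSet S) :
      interaction k S S + nonlocalPerimeter k S = (∫⁻ y : V, k ‖y‖ₑ) * volume S := by
    rw [interaction_self_add_nonlocalPerimeter hk.measurable hS, interaction_univ]
  have hsumE := hsum E hE
  rw [hvol, ← hsum _ measurableSet_ball] at hsumE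
  have hfin : interaction k E E ≠ ⊤ := by
    refine ne_top_of_le_ne_top ?_ (le_self_add.trans_eq (hsum E hE))
    exact mul_ne_top hkint (hvol ▸ measure_ball_lt_top.ne)
  rw [← ENNReal.add_le_add_iff_left hfin, hsumE]
  gcongr
  exact interaction_self_le_ball hk hkint hE hvol.le

lemma nonlocalPerimeter_ball_le [Nontrivial V] {k : ℝ≥0∞ → ℝ≥0∞} (hk : Antitone k) {ρ : ℝ≥0}
    {E : Set V} (hE : MeasurableSet E) (hvol : volume E = volume (ball (0 : V) ρ)) :
    nonlocalPerimeter k (ball (0 : V) ρ) ≤ nonlocalPerimeter k E := by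
  simp only [nonlocalPerimeter, interaction_eq_iSup_truncatedKernel hk]
  exact iSup_mono fun n ↦ nonlocalPerimeter_ball_le_of_lintegral_ne_top
    (antitone_truncatedKernel hk n) (lintegral_truncatedKernel_enorm_ne_top k n) hE hvol

lemma exists_volume_ball_eq [Nontrivial V] {v : ℝ≥0∞} (hv : v ≠ ⊤) :
    ∃ ρ : ℝ≥0, volume (ball (0 : V) ρ) = v := by
  have hball : volume (ball (0 : V) 1) ≠ 0 := (measure_ball_pos _ _ one_pos).ne'
  have hq : v / volume (ball (0 : V) 1) ≠ ⊤ := div_ne_top hv hball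
  refine ⟨(v / volume (ball (0 : V) 1)).toNNReal ^ (Module.finrank ℝ V : ℝ)⁻¹, ?_⟩
  rw [Measure.addHaar_ball volume (0 : V) (NNReal.coe_nonneg _), ← NNReal.coe_pow,
    ofReal_coe_nnreal, NNReal.rpow_inv_natCast_pow _ Module.finrank_pos.ne', coe_toNNReal hq,
    ENNReal.div_mul_cancel hball measure_ball_lt_top.ne]

lemma antitone_rpow_neg {a : ℝ} (ha : 0 ≤ a) : Antitone fun t : ℝ≥0∞ ↦ t ^ (-a) := by
  intro s t hst
  simp only [ENNReal.rpow_neg]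
  gcongr

lemma fracPerimeter_eq_nonlocalPerimeter {N : ℕ} {s : ℝ} {E : Set (EuclideanSpace ℝ (Fin N))}
    (hE : MeasurableSet E) :
    fracPerimeter N s E = nonlocalPerimeter (· ^ (-((N : ℝ) + 2 * s))) E := by
  refine setLIntegral_congr_fun hE fun x hx ↦ setLIntegral_congr_fun hE.compl fun y hy ↦ ?_
  have hxy : 0 < ‖x - y‖ := norm_sub_pos_iff.2 fun h ↦ hy (h ▸ hx)
  simp only [edist_dist, dist_eq_norm, ofReal_rpow_of_pos hxy]

theorem fractional_isoperimetric_inequality_general [Nontrivial V] {a : ℝ} (ha : 0 ≤ a)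
    {E : Set V} (hE : MeasurableSet E) (hE0 : volume E ≠ 0) (hE' : volume E ≠ ⊤) :
    nonlocalPerimeter (· ^ (-a)) (ball (0 : V) 1) * volume (ball (0 : V) 1) ^
          (-((2 * Module.finrank ℝ V - a) / Module.finrank ℝ V)) *
        volume E ^ ((2 * Module.finrank ℝ V - a) / Module.finrank ℝ V) ≤
      nonlocalPerimeter (· ^ (-a)) E := by
  obtain ⟨ρ, hρE⟩ := exists_volume_ball_eq (V := V) hE'
  have hρ : (0 : ℝ) < ρ := by
    refine NNReal.coe_pos.2 (pos_of_ne_zero fun h ↦ hE0 ?_)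
    simp [← hρE, h]
  have hball : ball (0 : V) ρ = (ρ : ℝ) • ball (0 : V) 1 := (smul_unitBall_of_pos hρ).symm
  have hB0 : volume (ball (0 : V) 1) ≠ 0 := (measure_ball_pos _ _ one_pos).ne'
  have hd : (Module.finrank ℝ V : ℝ) ≠ 0 := Nat.cast_ne_zero.2 Module.finrank_pos.ne'
  refine le_trans (le_of_eq ?_) (nonlocalPerimeter_ball_le (antitone_rpow_neg ha) hE hρE.symm)
  rw [hball, nonlocalPerimeter_rpow_smul hρ, ← hρE, Measure.addHaar_ball volume (0 : V) hρ.le,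
    ofReal_pow hρ.le, mul_rpow_of_ne_top (pow_ne_top ofReal_ne_top) measure_ball_lt_top.ne,
    ← rpow_natCast, ← rpow_mul, mul_div_cancel₀ _ hd, mul_left_comm, mul_assoc,
    ← rpow_add _ _ hB0 measure_ball_lt_top.ne, neg_add_cancel, rpow_zero, mul_one, sub_eq_add_neg]

end IsoperimetricInequality

/-- fractional isoperimetric inequality: for every measurable `E ⊂ ℝ^N` of
finite positive volume and `s ∈ (0,1/2)`,
`P_s(E) ≥ P_s(B_1) |B_1|^{-(N-2s)/N} |E|^{(N-2s)/N}`; i.e. among sets of given volume,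
balls minimize the fractional `s`-perimeter. -/
theorem fractional_isoperimetric_inequality
    (N : ℕ) (hN : 0 < N) (s : ℝ) (hs : 0 < s) (hs' : s < 1/2)
    (E : Set (EuclideanSpace ℝ (Fin N))) (hE : MeasurableSet E)
    (hvol : 0 < volume E) (hvol' : volume E < ⊤) :
    fracPerimeter N s (Metric.ball (0 : EuclideanSpace ℝ (Fin N)) 1) *
        (volume (Metric.ball (0 : EuclideanSpace ℝ (Fin N)) 1)) ^
          (-(((N : ℝ) - 2*s) / N)) *
        (volume E) ^ (((N : ℝ) - 2*s) / N) ≤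
      fracPerimeter N s E := by
  have : Nonempty (Fin N) := ⟨⟨0, hN⟩⟩
  have h := fractional_isoperimetric_inequality_general (a := N + 2 * s) (by positivity) hE
    hvol.ne' hvol'.ne
  rwa [finrank_euclideanSpace_fin, show 2 * (N : ℝ) - (N + 2 * s) = N - 2 * s by ring,
    ← fracPerimeter_eq_nonlocalPerimeter hE,
    ← fracPerimeter_eq_nonlocalPerimeter measurableSet_ball] at h
end
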